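/- Let G be a 3-connected graph that is {K33+, K33h}-free, and let {G1, G2} be a 3-separation of G. If G1^Y is nonplanar, then G2^Δ is a wheel. -/

import Mathlib

open SimpleGraph

/-- `H` is a minor of `G` (branch-set / model definition). -/
def IsMinor {W V : Type*} (H : SimpleGraph W) (G : SimpleGraph V) : Prop :=
  ∃ B : W → Set V,
    (∀ w, (B w).Nonempty) ∧
    (∀ w, (G.induce (B w)).Connected) ∧
    (Pairwise fun w₁ w₂ => Disjoint (B w₁) (B w₂)) ∧
    (∀ ⦃w₁ w₂ : W⦄, H.Adj w₁ w₂ → ∃ v₁ ∈ B w₁, ∃ v₂ ∈ B w₂, G.Adj v₁ v₂)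

def K5 : SimpleGraph (Fin 5) := ⊤

def K33 : SimpleGraph (Fin 3 ⊕ Fin 3) := completeBipartiteGraph (Fin 3) (Fin 3)

/-- A graph is planar iff it has neither a `K₅` nor a `K₃,₃` minor (Wagner's theorem). -/
def Planar {V : Type*} (G : SimpleGraph V) : Prop := ¬ IsMinor K5 G ∧ ¬ IsMinor K33 G

/-- `G / uw`: contract the edge `uw`, merging `w` into `u` (the vertex `w` becomes isolated). -/
def contractEdge {V : Type*} (G : SimpleGraph V) (u w : V) : SimpleGraph V :=
  SimpleGraph.fromRel fun a b =>
    a ≠ w ∧ b ≠ w ∧ (G.Adj a b ∨ (a = u ∧ G.Adj w b) ∨ (b = u ∧ G.Adj a w))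

/-- A nonplanar graph is almost-planar if for every edge, deletion or contraction is planar. -/
def AlmostPlanar {V : Type*} (G : SimpleGraph V) : Prop :=
  ¬ Planar G ∧ ∀ ⦃u v : V⦄, G.Adj u v →
    (Planar (G.deleteEdges {s(u, v)}) ∨ Planar (contractEdge G u v))

/-- `G` is `k`-connected: more than `k` vertices and deleting fewer than `k` vertices
leaves a connected graph. -/
def KConnected {V : Type*} (G : SimpleGraph V) (k : ℕ) : Prop :=
  k < Nat.card V ∧ ∀ s : Set V, s.ncard < k → (G.induce (sᶜ)).Connected

/-- `{G[A], G[B]}` is a `k`-separation of `G`. -/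
def IsSep {V : Type*} (G : SimpleGraph V) (k : ℕ) (A B : Set V) : Prop :=
  A ∪ B = Set.univ ∧ A ≠ Set.univ ∧ B ≠ Set.univ ∧ (A ∩ B).ncard = k ∧
  ∀ ⦃x y : V⦄, G.Adj x y → (x ∈ A ∧ y ∈ A) ∨ (x ∈ B ∧ y ∈ B)

/-- The star `K_{1,3}`, with centre `0`. -/
def K13 : SimpleGraph (Fin 4) := SimpleGraph.fromRel fun a _ => a = 0

def InternallyFourConnected {V : Type*} (G : SimpleGraph V) : Prop :=
  KConnected G 3 ∧ 5 ≤ Nat.card V ∧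
  ∀ A B : Set V, IsSep G 3 A B →
    Xor' (Nonempty (G.induce A ≃g K13)) (Nonempty (G.induce B ≃g K13))

/-- The wheel `W_n`: a cycle of length `n` plus a hub (`none`) joined to all of it. -/
def wheelGraph (n : ℕ) : SimpleGraph (Option (Fin n)) :=
  SimpleGraph.fromRel fun a b =>
    match a, b with
    | some i, some j => j.val = (i.val + 1) % n
    | none, some _ => True
    | _, _ => False

def IsWheel {V : Type*} (G : SimpleGraph V) : Prop :=
  ∃ n, 3 ≤ n ∧ Nonempty (G ≃g wheelGraph n)

/-- The double wheel `DW_n`: a cycle of length `n` plus two adjacent hubs joined to all of it. -/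
def doubleWheel (n : ℕ) : SimpleGraph (Fin n ⊕ Fin 2) :=
  SimpleGraph.fromRel fun a b =>
    match a, b with
    | .inl i, .inl j => j.val = (i.val + 1) % n
    | .inl _, .inr _ => True
    | .inr _, .inr _ => True
    | _, _ => False

/-- The Möbius ladder `M_n`: a cycle of length `2n` plus all "opposite" chords. -/
def mobiusLadder (n : ℕ) : SimpleGraph (Fin (2 * n)) :=
  SimpleGraph.fromRel fun i j =>
    j.val = (i.val + 1) % (2 * n) ∨ j.val = (i.val + n) % (2 * n)

/-- `C²_m`: a cycle of length `m` plus all chords between vertices at distance two. -/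
def squareCycle (m : ℕ) : SimpleGraph (Fin m) :=
  SimpleGraph.fromRel fun i j =>
    j.val = (i.val + 1) % m ∨ j.val = (i.val + 2) % m

/-- The alternating double wheel `AW_{2n}`: a cycle of length `2n` plus two adjacent hubs,
each joined to alternating cycle vertices. -/
def altDoubleWheel (n : ℕ) : SimpleGraph (Fin (2 * n) ⊕ Fin 2) :=
  SimpleGraph.fromRel fun a b =>
    match a, b with
    | .inl i, .inl j => j.val = (i.val + 1) % (2 * n)
    | .inl i, .inr k => i.val % 2 = k.val
    | .inr _, .inr _ => True
    | _, _ => False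

/-- The class `𝒲`: three wheels glued along a common triangle `V₀`, with no other edges. -/
def InClassW {V : Type*} (G : SimpleGraph V) : Prop :=
  ∃ P : V → Fin 4,
    (P ⁻¹' {0}).ncard = 3 ∧
    (∀ x y : V, P x = 0 → P y = 0 → x ≠ y → G.Adj x y) ∧
    (∀ i : Fin 4, i ≠ 0 → IsWheel (G.induce {v | P v = 0 ∨ P v = i})) ∧
    (∀ ⦃x y : V⦄, G.Adj x y → ∃ i : Fin 4, i ≠ 0 ∧ (P x = 0 ∨ P x = i) ∧ (P y = 0 ∨ P y = i))

/-- `EX₁`: `K₃,₃` plus a vertex joined to all of one colour class. -/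
def EX1 : SimpleGraph (Option (Fin 3 ⊕ Fin 3)) :=
  SimpleGraph.fromRel fun a b =>
    match a, b with
    | some (.inl _), some (.inr _) => True
    | none, some (.inl _) => True
    | _, _ => False

/-- `EX₂`: `K₅` plus a vertex joined to three of its vertices. -/
def EX2 : SimpleGraph (Option (Fin 5)) :=
  SimpleGraph.fromRel fun a b =>
    match a, b with
    | some i, some j => i ≠ j
    | none, some j => j.val < 3
    | _, _ => False

/-- `EX₈`: `K₃,₃` plus a vertex joined to two vertices of one class and one of the other. -/
def EX8 : SimpleGraph (Option (Fin 3 ⊕ Fin 3)) :=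
  SimpleGraph.fromRel fun a b =>
    match a, b with
    | some (.inl _), some (.inr _) => True
    | none, some x => x = Sum.inl 0 ∨ x = Sum.inl 1 ∨ x = Sum.inr 0
    | _, _ => False

/-- `K₅ʰ`: subdivide the edges `01` and `02` of `K₅` and join the two subdivision vertices. -/
def K5h : SimpleGraph (Fin 5 ⊕ Fin 2) :=
  SimpleGraph.fromRel fun a b =>
    match a, b with
    | .inl i, .inl j =>
        i ≠ j ∧ ¬(i = 0 ∧ j = 1) ∧ ¬(i = 1 ∧ j = 0) ∧ ¬(i = 0 ∧ j = 2) ∧ ¬(i = 2 ∧ j = 0)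
    | .inl i, .inr k => (k = 0 ∧ (i = 0 ∨ i = 1)) ∨ (k = 1 ∧ (i = 0 ∨ i = 2))
    | .inr _, .inr _ => True
    | _, _ => False

/-- `K₃,₃ʰ`: subdivide two edges of `K₃,₃` at a common endpoint and join
the two subdivision vertices. -/
def K33h : SimpleGraph ((Fin 3 ⊕ Fin 3) ⊕ Fin 2) :=
  SimpleGraph.fromRel fun a b =>
    match a, b with
    | .inl (.inl i), .inl (.inr j) => ¬(i = 0 ∧ (j = 0 ∨ j = 1))
    | .inl (.inr j), .inl (.inl i) => ¬(i = 0 ∧ (j = 0 ∨ j = 1))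
    | .inl x, .inr k =>
        (k = 0 ∧ (x = Sum.inl 0 ∨ x = Sum.inr 0)) ∨ (k = 1 ∧ (x = Sum.inl 0 ∨ x = Sum.inr 1))
    | .inr _, .inr _ => True
    | _, _ => False

/-- `K₅⁺`: `K₅` plus a pendant vertex. -/
def K5plus : SimpleGraph (Option (Fin 5)) :=
  SimpleGraph.fromRel fun a b =>
    match a, b with
    | some i, some j => i ≠ j
    | none, some j => j = 0
    | _, _ => False

/-- `K₃,₃⁺`: `K₃,₃` plus a pendant vertex. -/
def K33plus : SimpleGraph (Option (Fin 3 ⊕ Fin 3)) :=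
  SimpleGraph.fromRel fun a b =>
    match a, b with
    | some (.inl _), some (.inr _) => True
    | none, some x => x = Sum.inl 0
    | _, _ => False

/-- `K₅ ⊕ e`: disjoint union of `K₅` and one edge. -/
def K5oplus : SimpleGraph (Fin 5 ⊕ Fin 2) :=
  SimpleGraph.fromRel fun a b =>
    match a, b with
    | .inl i, .inl j => i ≠ j
    | .inr _, .inr _ => True
    | _, _ => False

/-- `K₃,₃ ⊕ e`: disjoint union of `K₃,₃` and one edge. -/
def K33oplus : SimpleGraph ((Fin 3 ⊕ Fin 3) ⊕ Fin 2) :=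
  SimpleGraph.fromRel fun a b =>
    match a, b with
    | .inl (.inl _), .inl (.inr _) => True
    | .inr _, .inr _ => True
    | _, _ => False

/-- The triad addition of `H` at `x y z`: add a new vertex joined to `x`, `y`, `z`. -/
def triadAddition {U : Type*} (H : SimpleGraph U) (x y z : U) : SimpleGraph (Option U) :=
  SimpleGraph.fromRel fun a b =>
    match a, b with
    | some u, some v => H.Adj u v
    | none, some u => u = x ∨ u = y ∨ u = z
    | _, _ => False

def IsTriadAdditionOf {V U : Type*} (G : SimpleGraph V) (H : SimpleGraph U) : Prop :=
  ∃ x y z : U, x ≠ y ∧ y ≠ z ∧ x ≠ z ∧ Nonempty (G ≃g triadAddition H x y z)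

/-- `G` is obtained from `H` by subdividing (possibly repeatedly) edges of `H`,
all of which lie in `S`. -/
def IsSubdivisionWithin {V W : Type*} (G : SimpleGraph V) (H : SimpleGraph W)
    (S : Set (Sym2 W)) : Prop :=
  ∃ (f : W ↪ V) (p : ∀ ⦃u v : W⦄, H.Adj u v → G.Walk (f u) (f v)),
    (∀ ⦃u v : W⦄ (h : H.Adj u v), (p h).IsPath) ∧
    (∀ ⦃u v : W⦄ (h : H.Adj u v), p h.symm = (p h).reverse) ∧
    (∀ ⦃u v : W⦄ (h : H.Adj u v), s(u, v) ∉ S → (p h).length = 1) ∧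
    (∀ ⦃u v : W⦄ (h : H.Adj u v) (w : W), f w ∈ (p h).support → w = u ∨ w = v) ∧
    (∀ ⦃u v u' v' : W⦄ (h : H.Adj u v) (h' : H.Adj u' v'), s(u, v) ≠ s(u', v') →
      ∀ x : V, x ∈ (p h).support → x ∈ (p h').support → x ∈ Set.range f) ∧
    (∀ x : V, x ∈ Set.range f ∨ ∃ (u v : W) (h : H.Adj u v), x ∈ (p h).support) ∧
    (∀ e ∈ G.edgeSet, ∃ (u v : W) (h : H.Adj u v), e ∈ (p h).edges)

/-- `G` is a subdivision of `H`. -/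
def IsSubdivision {V W : Type*} (G : SimpleGraph V) (H : SimpleGraph W) : Prop :=
  IsSubdivisionWithin G H Set.univ

/-- `D(H)`: the set of edges of `H` whose deletion leaves a planar graph. -/
def Dset {U : Type*} (H : SimpleGraph U) : Set (Sym2 U) :=
  {e | e ∈ H.edgeSet ∧ Planar (H.deleteEdges {e})}

/-- `G[A]` together with all edges between vertices of `T` (`T ⊆ A` intended). -/
def deltaGraph {V : Type*} (G : SimpleGraph V) (A T : Set V) : SimpleGraph A :=
  SimpleGraph.fromRel fun a b => G.Adj a.1 b.1 ∨ (a.1 ∈ T ∧ b.1 ∈ T)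

/-- `G[A]^Y` for the separation `{G[A], G[B]}`: add a new vertex joined to `A ∩ B`. -/
def sepY {V : Type*} (G : SimpleGraph V) (A B : Set V) : SimpleGraph (Option A) :=
  SimpleGraph.fromRel fun x y =>
    match x, y with
    | some a, some b => G.Adj a.1 b.1
    | none, some a => a.1 ∈ A ∩ B
    | _, _ => False

/-- `G₂` is obtained from `G` by adding isolated vertices. -/
def AddIsolated {V₂ V : Type*} (G₂ : SimpleGraph V₂) (G : SimpleGraph V) : Prop :=
  ∃ f : V ↪ V₂, (∀ a b : V, G₂.Adj (f a) (f b) ↔ G.Adj a b) ∧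
    ∀ x : V₂, x ∉ Set.range f → ∀ y : V₂, ¬ G₂.Adj x y

/-- The set of non-isolated vertices of `G` (so `G* = G.induce (core G)`). -/
def core {V : Type*} (G : SimpleGraph V) : Set V := {v | ∃ w, G.Adj v w}

/-- `G` is obtained from `G'` by 3-summing wheels onto distinct triangles of `G'`. -/
def SumWheelsOnto {V U : Type*} (G : SimpleGraph V) (G' : SimpleGraph U) : Prop :=
  ∃ (g : U ↪ V) (k : ℕ) (Wp : Fin k → Set V) (T : Fin k → Set U),
    (∀ i, (T i).ncard = 3) ∧
    (∀ i, ∀ x ∈ T i, ∀ y ∈ T i, x ≠ y → G'.Adj x y) ∧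
    Function.Injective T ∧
    (∀ i, Disjoint (Wp i) (Set.range ⇑g)) ∧
    (Pairwise fun i j => Disjoint (Wp i) (Wp j)) ∧
    (Set.range ⇑g ∪ ⋃ i, Wp i) = Set.univ ∧
    (∀ i, IsWheel (deltaGraph G (Wp i ∪ ⇑g '' T i) (⇑g '' T i))) ∧
    (∀ a b : U, G.Adj (g a) (g b) → G'.Adj a b) ∧
    (∀ a b : U, G'.Adj a b → (G.Adj (g a) (g b) ∨ ∃ i, a ∈ T i ∧ b ∈ T i)) ∧
    (∀ ⦃x y : V⦄, G.Adj x y → (x ∈ Set.range ⇑g ∧ y ∈ Set.range ⇑g) ∨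
      ∃ i, x ∈ Wp i ∪ ⇑g '' T i ∧ y ∈ Wp i ∪ ⇑g '' T i) ∧
    (∀ i, ∀ x ∈ Wp i, ∀ ⦃y : V⦄, G.Adj x y → y ∈ Wp i ∪ ⇑g '' T i)

/-- `H` has an edge whose deletion and contraction are both nonplanar. -/
def HasBadEdge {V : Type*} (H : SimpleGraph V) : Prop :=
  ∃ u v : V, H.Adj u v ∧ ¬ Planar (H.deleteEdges {s(u, v)}) ∧ ¬ Planar (contractEdge H u v)


namespace S8

section basic
variable {V : Type} [Finite V] (G : SimpleGraph V)

lemma boundary {C S : Set V} (hC : (G.induce C).Connected) (hSC : S ⊆ C) {s0 c0 : V}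
    (hs : s0 ∈ S) (hc : c0 ∈ C) (hcs : c0 ∉ S) :
    ∃ s ∈ S, ∃ c ∈ C, c ∉ S ∧ G.Adj s c := by
  obtain ⟨p⟩ := hC.preconnected ⟨s0, hSC hs⟩ ⟨c0, hc⟩
  obtain ⟨d, -, h1, h2⟩ := p.exists_boundary_dart {u : C | u.1 ∈ S} hs hcs
  exact ⟨d.fst.1, h1, d.snd.1, d.snd.2, h2, d.adj⟩

lemma conn_single (a : V) : (G.induce ({a} : Set V)).Connected := by
  haveI : Subsingleton ({a} : Set V) := ⟨fun x y => Subtype.ext (x.2.trans y.2.symm)⟩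
  haveI : Nonempty ({a} : Set V) := ⟨⟨a, rfl⟩⟩
  exact ⟨SimpleGraph.Preconnected.of_subsingleton⟩

lemma conn_union {S T : Set V} (hS : (G.induce S).Connected) (hT : (G.induce T).Connected)
    {u v : V} (hu : u ∈ S) (hv : v ∈ T) (h : G.Adj u v) : (G.induce (S ∪ T)).Connected :=
  connected_induce_union hS.preconnected hT.preconnected hu hv h

lemma conn_insert {S : Set V} (hS : (G.induce S).Connected)
    {u v : V} (hu : u ∈ S) (h : G.Adj u v) : (G.induce (insert v S)).Connected := by
  have := conn_union G hS (conn_single G v) hu rfl h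
  rwa [Set.union_singleton] at this

lemma conn_congr {S T : Set V} (h : T = S) (hS : (G.induce S).Connected) :
    (G.induce T).Connected := h ▸ hS

lemma conn_ne {S : Set V} (hS : (G.induce S).Connected) : S.Nonempty := by
  obtain ⟨x⟩ := hS.nonempty
  exact ⟨x.1, x.2⟩

lemma exists_max (p : Set V → Prop) (S0 : Set V) (h0 : p S0) :
    ∃ S, S0 ⊆ S ∧ p S ∧ ∀ T, p T → S ⊆ T → T = S := by
  obtain ⟨S, h1, h2⟩ := (Set.toFinite {S | p S}).exists_le_maximal (a := S0) h0
  exact ⟨S, h1, h2.prop, fun T hT hST => (h2.eq_of_ge hT hST)⟩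

lemma exists_min (p : Set V → Prop) (S0 : Set V) (h0 : p S0) :
    ∃ S, S ⊆ S0 ∧ p S ∧ ∀ T, p T → T ⊆ S → T = S := by
  obtain ⟨S, h1, h2⟩ := (Set.toFinite {S | p S}).exists_le_minimal (a := S0) h0
  exact ⟨S, h1, h2.prop, fun T hT hST => (h2.eq_of_le hT hST)⟩

lemma noncut {C S : Set V} (hC : (G.induce C).Connected) (hS : (G.induce S).Connected)
    (hSC : S ⊆ C) {c0 : V} (hc : c0 ∈ C) (hcs : c0 ∉ S) :
    ∃ c ∈ C, c ∉ S ∧ (G.induce (C \ {c})).Connected ∧ ∃ u ∈ C \ {c}, G.Adj u c := by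
  obtain ⟨M, hSM, ⟨hM, hMC, hMne⟩, hmax⟩ := exists_max
    (fun T : Set V => (G.induce T).Connected ∧ T ⊆ C ∧ T ≠ C) S
    ⟨hS, hSC, fun h => hcs (h ▸ hc)⟩
  obtain ⟨s, hs⟩ := conn_ne G hM
  have : ∃ c1 ∈ C, c1 ∉ M := by
    by_contra hh
    push Not at hh
    exact hMne (subset_antisymm hMC hh)
  obtain ⟨c1, hc1, hc1M⟩ := this
  obtain ⟨u, hu, c, hcC, hcM, hadj⟩ := boundary G hC hMC hs hc1 hc1M
  have hins : insert c M = C := by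
    by_contra hne
    have := hmax (insert c M) ⟨conn_insert G hM hu hadj, Set.insert_subset hcC hMC, hne⟩
      (Set.subset_insert _ _)
    exact hcM (this ▸ Set.mem_insert _ _)
  have hdiff : C \ {c} = M := by
    rw [← hins]; ext w; simp only [Set.mem_diff, Set.mem_insert_iff, Set.mem_singleton_iff]
    constructor
    · rintro ⟨h | h, h'⟩
      · exact absurd h h'
      · exact h
    · intro h; exact ⟨Or.inr h, fun h' => hcM (h' ▸ h)⟩
  exact ⟨c, hcC, fun h => hcM (hSM h), hdiff ▸ hM, u, hdiff ▸ hu, hadj⟩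

lemma component {X : Set V} {a : V} (ha : a ∈ X) :
    ∃ K ⊆ X, a ∈ K ∧ (G.induce K).Connected ∧ ∀ k ∈ K, ∀ w ∈ X, G.Adj k w → w ∈ K := by
  obtain ⟨K, haK, ⟨hK, hKX⟩, hmax⟩ := exists_max
    (fun T : Set V => (G.induce T).Connected ∧ T ⊆ X) {a}
    ⟨conn_single G a, Set.singleton_subset_iff.2 ha⟩
  refine ⟨K, hKX, haK rfl, hK, fun k hk w hw h => ?_⟩
  have := hmax (insert w K) ⟨conn_insert G hK hk h, Set.insert_subset hw hKX⟩
    (Set.subset_insert _ _)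
  exact this ▸ Set.mem_insert _ _

end basic

section labels
variable {V : Type} [Finite V] (G : SimpleGraph V)

/-- label class is connected -/
def Cn (f : V → ℕ) (i : ℕ) : Prop := (G.induce {u | f u = i}).Connected
/-- label classes are adjacent -/
def Tc (f : V → ℕ) (i j : ℕ) : Prop := ∃ u w, f u = i ∧ f w = j ∧ G.Adj u w

variable {G}

lemma Tc.symm {f : V → ℕ} {i j : ℕ} (h : Tc G f i j) : Tc G f j i := by
  obtain ⟨u, w, h1, h2, h3⟩ := h
  exact ⟨w, u, h2, h1, h3.symm⟩

lemma tc_comm {f : V → ℕ} {i j : ℕ} : Tc G f i j ↔ Tc G f j i := ⟨Tc.symm, Tc.symm⟩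

lemma Cn.ne {f : V → ℕ} {i : ℕ} (h : Cn G f i) : ∃ u, f u = i := conn_ne G h

lemma fresh (f : V → ℕ) : ∃ P, ∀ u, f u ≠ P := by
  obtain ⟨P, hP⟩ := (Set.finite_range f).exists_notMem
  exact ⟨P, fun u h => hP ⟨u, h⟩⟩

lemma minor_of_label {W : Type} {H : SimpleGraph W} (f : V → ℕ) (e : W → ℕ)
    (he : Function.Injective e) (h1 : ∀ w, Cn G f (e w))
    (h2 : ∀ w w', H.Adj w w' → Tc G f (e w) (e w')) : IsMinor H G := by
  refine ⟨fun w => {u | f u = e w}, fun w => (h1 w).ne, h1, fun w w' hw => ?_, fun w w' h => ?_⟩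
  · refine Set.disjoint_left.2 ?_
    intro u hu hu'
    exact hw (he (hu.symm.trans hu'))
  · obtain ⟨u, v, hu, hv, ha⟩ := h2 w w' h
    exact ⟨u, hu, v, hv, ha⟩

lemma label_of_minor {W : Type} {H : SimpleGraph W} (e : W → ℕ) (he : Function.Injective e)
    (n : ℕ) (hn : ∀ w, e w ≠ n) (h : IsMinor H G) :
    ∃ f : V → ℕ, (∀ w, Cn G f (e w)) ∧ (∀ w w', H.Adj w w' → Tc G f (e w) (e w')) ∧
      ∀ u, f u = n ∨ ∃ w, f u = e w := by
  classical
  obtain ⟨B, -, h2, h3, h4⟩ := h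
  let f : V → ℕ := fun u => if hu : ∃ w, u ∈ B w then e hu.choose else n
  have key : ∀ u w, f u = e w ↔ u ∈ B w := by
    intro u w
    by_cases hu : ∃ w, u ∈ B w
    · have hf : f u = e hu.choose := dif_pos hu
      rw [hf]
      constructor
      · intro h; rw [← he h]; exact hu.choose_spec
      · intro h
        by_contra hne
        have : hu.choose ≠ w := fun hh => hne (by rw [hh])
        exact (Set.disjoint_left.1 (h3 this)) hu.choose_spec h
    · have hf : f u = n := dif_neg hu
      rw [hf]
      exact ⟨fun h => absurd h.symm (hn w), fun h => absurd ⟨w, h⟩ hu⟩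
  have hs : ∀ w, {u | f u = e w} = B w := fun w => by ext u; exact key u w
  refine ⟨f, fun w => ?_, fun w w' h => ?_, fun u => ?_⟩
  · unfold Cn; rw [hs]; exact h2 w
  · obtain ⟨u, hu, v, hv, ha⟩ := h4 h
    exact ⟨u, v, (key _ _).2 hu, (key _ _).2 hv, ha⟩
  · by_cases hu : ∃ w, u ∈ B w
    · right; obtain ⟨w, hw⟩ := hu; exact ⟨w, (key _ _).2 hw⟩
    · left; exact dif_neg hu

/-- merge label `P` into label `c` -/
def mg (f : V → ℕ) (P c : ℕ) : V → ℕ := fun u => if f u = P then c else f u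

lemma mg_cn {f : V → ℕ} {P c i : ℕ} (h : Cn G f i) (h1 : i ≠ P) (h2 : i ≠ c) :
    Cn G (mg f P c) i := by
  have : {u | mg f P c u = i} = {u | f u = i} := by
    ext u; simp only [mg, Set.mem_setOf_eq]; split_ifs <;> grind
  unfold Cn at *; rwa [this]

lemma mg_cn' {f : V → ℕ} {P c : ℕ} (h : Cn G f P) (h1 : Cn G f c) (h2 : Tc G f P c) :
    Cn G (mg f P c) c := by
  have : {u | mg f P c u = c} = {u | f u = P} ∪ {u | f u = c} := by
    ext u; simp only [mg, Set.mem_setOf_eq, Set.mem_union]; split_ifs <;> grind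
  obtain ⟨u, w, hu, hw, ha⟩ := h2
  unfold Cn at *; rw [this]
  exact conn_union G h h1 hu hw ha

lemma mg_tc {f : V → ℕ} {P c i j : ℕ} (h : Tc G f i j) (h1 : i ≠ P) (h2 : j ≠ P) :
    Tc G (mg f P c) i j := by
  obtain ⟨u, w, hu, hw, ha⟩ := h
  exact ⟨u, w, by simp [mg, hu, h1], by simp [mg, hw, h2], ha⟩

lemma mg_tc' {f : V → ℕ} {P c j : ℕ} (h : Tc G f P j) (h2 : j ≠ P) :
    Tc G (mg f P c) c j := by
  obtain ⟨u, w, hu, hw, ha⟩ := h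
  exact ⟨u, w, by simp [mg, hu], by simp [mg, hw, h2], ha⟩

lemma split {f : V → ℕ} {a P : ℕ} {q r : V} (ha : Cn G f a) (hq : f q = a) (hr : f r = a)
    (hrq : r ≠ q) (hP : ∀ u, f u ≠ P) :
    ∃ (p : V) (f1 : V → ℕ), f p = a ∧ p ≠ q ∧ f1 p = P ∧ (∀ u, u ≠ p → f1 u = f u) ∧
      Cn G f1 a ∧ Cn G f1 P ∧ Tc G f1 a P ∧
      (∀ i, i ≠ a → Cn G f i → Cn G f1 i) ∧
      (∀ i j, i ≠ a → j ≠ a → Tc G f i j → Tc G f1 i j) ∧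
      (∀ i, i ≠ a → Tc G f a i → Tc G f1 a i ∨ Tc G f1 P i) := by
  classical
  obtain ⟨p, hp, hpq, hc, u, hu, hadj⟩ := noncut G ha (conn_single G q)
    (Set.singleton_subset_iff.2 hq) hr hrq
  have haP : a ≠ P := fun h => hP q (h ▸ hq)
  refine ⟨p, Function.update f p P, hp, hpq, by simp, fun u hu => by simp [hu], ?_, ?_, ?_, ?_,
    ?_, ?_⟩
  · refine conn_congr G ?_ hc
    ext w
    by_cases hw : w = p
    · simp [hw, haP.symm]
    · simp [hw]
  · refine conn_congr G ?_ (conn_single G p)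
    ext w
    by_cases hw : w = p
    · simp [hw]
    · simp [hw, hP]
  · refine ⟨u, p, ?_, by simp, hadj⟩
    have : u ≠ p := hu.2
    simp only [Function.update_of_ne this]
    exact hu.1
  · intro i hi h
    refine conn_congr G ?_ h
    obtain ⟨w0, hw0⟩ := h.ne
    ext w
    by_cases hw : w = p
    · have : f p = a := hp
      simp only [hw, Function.update_self, Set.mem_setOf_eq, this]
      have := hP w0
      grind
    · simp [hw]
  · rintro i j hi hj ⟨x, y, hx, hy, hxy⟩
    have : f p = a := hp
    have h1 : x ≠ p := by grind
    have h2 : y ≠ p := by grind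
    exact ⟨x, y, by simp [h1, hx], by simp [h2, hy], hxy⟩
  · rintro i hi ⟨x, y, hx, hy, hxy⟩
    have : f p = a := hp
    have h2 : y ≠ p := by grind
    by_cases h1 : x = p
    · right
      exact ⟨x, y, by simp [h1], by simp [h2, hy], hxy⟩
    · left
      exact ⟨x, y, by simp [h1, hx], by simp [h2, hy], hxy⟩

end labels


section k33
variable {V : Type} [Finite V] {G : SimpleGraph V}

/-- a labelled `K33` model -/
structure K33L (G : SimpleGraph V) (f : V → ℕ) (a1 a2 a3 b1 b2 b3 : ℕ) : Prop where
  nd : [a1, a2, a3, b1, b2, b3].Nodup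
  ca1 : Cn G f a1
  ca2 : Cn G f a2
  ca3 : Cn G f a3
  cb1 : Cn G f b1
  cb2 : Cn G f b2
  cb3 : Cn G f b3
  t11 : Tc G f a1 b1
  t12 : Tc G f a1 b2
  t13 : Tc G f a1 b3
  t21 : Tc G f a2 b1
  t22 : Tc G f a2 b2
  t23 : Tc G f a2 b3
  t31 : Tc G f a3 b1
  t32 : Tc G f a3 b2
  t33 : Tc G f a3 b3

lemma K33L.minor {f : V → ℕ} {a1 a2 a3 b1 b2 b3 : ℕ} (h : K33L G f a1 a2 a3 b1 b2 b3) :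
    IsMinor K33 G := by
  obtain ⟨nd, c1, c2, c3, d1, d2, d3, t11, t12, t13, t21, t22, t23, t31, t32, t33⟩ := h
  simp only [List.nodup_cons, List.mem_cons, List.not_mem_nil, or_false, not_or] at nd
  apply minor_of_label f (Sum.elim ![a1, a2, a3] ![b1, b2, b3])
  · rintro (i | i) (j | j) hij <;> fin_cases i <;> fin_cases j <;> simp at hij ⊢ <;> grind
  · rintro (i | i) <;> fin_cases i <;> simpa
  · rintro (i | i) (j | j) hij
    · simp [K33] at hij
    · fin_cases i <;> fin_cases j <;> simpa
    · fin_cases i <;> fin_cases j <;> simp <;> apply Tc.symm <;> assumption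
    · simp [K33] at hij

lemma K33L.swap {f : V → ℕ} {a1 a2 a3 b1 b2 b3 : ℕ} (h : K33L G f a1 a2 a3 b1 b2 b3) :
    K33L G f b1 b2 b3 a1 a2 a3 := by
  obtain ⟨nd, c1, c2, c3, d1, d2, d3, t11, t12, t13, t21, t22, t23, t31, t32, t33⟩ := h
  refine ⟨by grind, d1, d2, d3, c1, c2, c3, ?_, ?_, ?_, ?_, ?_, ?_, ?_, ?_, ?_⟩ <;>
    apply Tc.symm <;> assumption

lemma K33L.rotA {f : V → ℕ} {a1 a2 a3 b1 b2 b3 : ℕ} (h : K33L G f a1 a2 a3 b1 b2 b3) :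
    K33L G f a2 a3 a1 b1 b2 b3 := by
  obtain ⟨nd, c1, c2, c3, d1, d2, d3, t11, t12, t13, t21, t22, t23, t31, t32, t33⟩ := h
  constructor <;> first | assumption | grind

lemma exists_k33L (h : IsMinor K33 G) : ∃ f : V → ℕ, K33L G f 0 1 2 3 4 5 ∧ ∀ u, f u ≤ 6 := by
  obtain ⟨f, h1, h2, h3⟩ := label_of_minor (Sum.elim ![0, 1, 2] ![3, 4, 5])
    (by decide) 6 (by decide) h
  refine ⟨f, ?_, fun u => ?_⟩
  · constructor
    · decide
    · exact h1 (.inl 0)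
    · exact h1 (.inl 1)
    · exact h1 (.inl 2)
    · exact h1 (.inr 0)
    · exact h1 (.inr 1)
    · exact h1 (.inr 2)
    · exact h2 (.inl 0) (.inr 0) (by simp [K33])
    · exact h2 (.inl 0) (.inr 1) (by simp [K33])
    · exact h2 (.inl 0) (.inr 2) (by simp [K33])
    · exact h2 (.inl 1) (.inr 0) (by simp [K33])
    · exact h2 (.inl 1) (.inr 1) (by simp [K33])
    · exact h2 (.inl 1) (.inr 2) (by simp [K33])
    · exact h2 (.inl 2) (.inr 0) (by simp [K33])
    · exact h2 (.inl 2) (.inr 1) (by simp [K33])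
    · exact h2 (.inl 2) (.inr 2) (by simp [K33])
  · rcases h3 u with h | ⟨w, h⟩
    · omega
    · rcases w with i | i <;> fin_cases i <;> simp at h <;> omega

/-- outcome 1: `K33` avoiding `v` -/
def Out1 (G : SimpleGraph V) (v : V) : Prop := ∃ f a1 a2 a3 b1 b2 b3,
  K33L G f a1 a2 a3 b1 b2 b3 ∧ f v ∉ [a1, a2, a3, b1, b2, b3]

/-- `K33` with the edge `a1 b1` subdivided by the class `D` containing `v` -/
structure Sig33 (G : SimpleGraph V) (v : V) (f : V → ℕ) (D a1 a2 a3 b1 b2 b3 : ℕ) : Prop where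
  nd : [D, a1, a2, a3, b1, b2, b3].Nodup
  cD : Cn G f D
  ca1 : Cn G f a1
  ca2 : Cn G f a2
  ca3 : Cn G f a3
  cb1 : Cn G f b1
  cb2 : Cn G f b2
  cb3 : Cn G f b3
  ta : Tc G f D a1
  tb : Tc G f D b1
  t12 : Tc G f a1 b2
  t13 : Tc G f a1 b3
  t21 : Tc G f a2 b1
  t22 : Tc G f a2 b2
  t23 : Tc G f a2 b3
  t31 : Tc G f a3 b1
  t32 : Tc G f a3 b2
  t33 : Tc G f a3 b3
  hv : f v = D

/-- outcome 2 -/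
def Out2 (G : SimpleGraph V) (v : V) : Prop := ∃ f D a1 a2 a3 b1 b2 b3,
  Sig33 G v f D a1 a2 a3 b1 b2 b3 ∧ ∀ u, f u = D → u = v

/-- outcome 3 -/
def Out3 (G : SimpleGraph V) (v : V) : Prop := ∃ f a1 a2 a3 b1 b2 b3,
  K33L G f a1 a2 a3 b1 b2 b3 ∧ ∀ u, f u = a1 ↔ u = v

lemma fiber_lt {f f2 : V → ℕ} {a : ℕ} {p : V} (hp : f p = a) (h2 : f2 p ≠ a)
    (h : ∀ u, u ≠ p → f2 u = a → f u = a) :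
    {u | f2 u = a}.ncard < {u | f u = a}.ncard := by
  apply Set.ncard_lt_ncard _ (Set.toFinite _)
  refine ⟨fun u hu => ?_, fun hh => h2 (hh hp)⟩
  by_cases hup : u = p
  · subst hup; exact hp
  · exact h u hup hu

lemma sig33_out {v : V} (n : ℕ) : ∀ {f : V → ℕ} {D a1 a2 a3 b1 b2 b3 : ℕ},
    Sig33 G v f D a1 a2 a3 b1 b2 b3 → {u | f u = D}.ncard = n → Out1 G v ∨ Out2 G v := by
  induction n using Nat.strong_induction_on with
  | _ n ih =>
  intro f D a1 a2 a3 b1 b2 b3 h hn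
  by_cases hr : ∀ u, f u = D → u = v
  · exact Or.inr ⟨f, D, a1, a2, a3, b1, b2, b3, h, hr⟩
  push Not at hr
  obtain ⟨r, hrD, hrv⟩ := hr
  obtain ⟨P, hP⟩ := fresh f
  obtain ⟨nd, cD, c1, c2, c3, d1, d2, d3, ta, tb, t12, t13, t21, t22, t23, t31, t32, t33, hv⟩ := h
  simp only [List.nodup_cons, List.mem_cons, List.not_mem_nil, or_false, not_or] at nd
  have pf : ∀ i, Cn G f i → i ≠ P := fun i hi => by
    obtain ⟨u, hu⟩ := hi.ne; rintro rfl; exact hP u hu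
  have n0 := pf _ cD
  have n1 := pf _ c1
  have n2 := pf _ c2
  have n3 := pf _ c3
  have n4 := pf _ d1
  have n5 := pf _ d2
  have n6 := pf _ d3
  obtain ⟨p, f1, hp, hpv, hf1p, hf1, kD, kP, tDP, kC, kT, kO⟩ := split cD hv hrD hrv hP
  have v1 : f1 v = D := by rw [hf1 v (Ne.symm hpv), hv]
  replace c1 := kC a1 (by grind) c1
  replace c2 := kC a2 (by grind) c2
  replace c3 := kC a3 (by grind) c3
  replace d1 := kC b1 (by grind) d1
  replace d2 := kC b2 (by grind) d2
  replace d3 := kC b3 (by grind) d3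
  replace t12 := kT _ _ (by grind) (by grind) t12
  replace t13 := kT _ _ (by grind) (by grind) t13
  replace t21 := kT _ _ (by grind) (by grind) t21
  replace t22 := kT _ _ (by grind) (by grind) t22
  replace t23 := kT _ _ (by grind) (by grind) t23
  replace t31 := kT _ _ (by grind) (by grind) t31
  replace t32 := kT _ _ (by grind) (by grind) t32
  replace t33 := kT _ _ (by grind) (by grind) t33
  replace ta := kO a1 (by grind) ta
  replace tb := kO b1 (by grind) tb
  have card : ∀ c, c ≠ D → {u | mg f1 P c u = D}.ncard < n := by
    intro c hc
    rw [← hn]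
    apply fiber_lt hp
    · simp only [mg, hf1p, if_true]; exact hc
    · intro u hu h; rw [← hf1 u hu]; simp only [mg] at h; split_ifs at h; exact absurd h hc; exact h
  by_cases hPa : Tc G f1 P a1
  · by_cases hPb : Tc G f1 P b1
    · left
      refine ⟨mg f1 P a1, a1, a2, a3, b1, b2, b3, ?_, ?_⟩
      · constructor
        · grind
        · exact mg_cn' kP c1 hPa
        all_goals first
          | (apply mg_cn <;> first | assumption | grind)
          | (apply mg_tc <;> first | assumption | grind)
          | (apply mg_tc' <;> first | assumption | grind)
      · simp only [mg, v1]; grind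
    · refine ih _ (card a1 (by grind)) (f := mg f1 P a1) (D := D) (a1 := a1) (a2 := a2) (a3 := a3)
        (b1 := b1) (b2 := b2) (b3 := b3) ?_ rfl
      constructor
      · grind
      · apply mg_cn <;> first | assumption | grind
      · exact mg_cn' kP c1 hPa
      all_goals first
          | (apply mg_cn <;> first | assumption | grind)
          | (apply mg_tc <;> first | assumption | grind)
          | skip
      · apply Tc.symm; apply mg_tc'; exact tDP.symm; grind
      · simp only [mg, v1]; grind
  · by_cases hPb : Tc G f1 P b1
    · refine ih _ (card b1 (by grind)) (f := mg f1 P b1) (D := D) (a1 := a1) (a2 := a2) (a3 := a3)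
        (b1 := b1) (b2 := b2) (b3 := b3) ?_ rfl
      constructor
      · grind
      · apply mg_cn <;> first | assumption | grind
      · apply mg_cn <;> first | assumption | grind
      · apply mg_cn <;> first | assumption | grind
      · apply mg_cn <;> first | assumption | grind
      · exact mg_cn' kP d1 hPb
      all_goals first
          | (apply mg_cn <;> first | assumption | grind)
          | (apply mg_tc <;> first | assumption | grind)
          | skip
      · apply Tc.symm; apply mg_tc'; exact tDP.symm; grind
      · simp only [mg, v1]; grind
    · refine ih {u | f1 u = D}.ncard ?_ (f := f1) (D := D) (a1 := a1) (a2 := a2) (a3 := a3)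
        (b1 := b1) (b2 := b2) (b3 := b3) ?_ rfl
      · rw [← hn]
        apply fiber_lt hp
        · rw [hf1p]; exact n0.symm
        · intro u hu h; rw [← hf1 u hu]; exact h
      · constructor <;> first | assumption | grind

lemma k33_out {v : V} (n : ℕ) : ∀ {f : V → ℕ} {a1 a2 a3 b1 b2 b3 : ℕ},
    K33L G f a1 a2 a3 b1 b2 b3 → f v = a1 → {u | f u = a1}.ncard = n →
    Out1 G v ∨ Out2 G v ∨ Out3 G v := by
  induction n using Nat.strong_induction_on with
  | _ n ih =>
  intro f D a2 a3 b1 b2 b3 h hv hn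
  by_cases hr : ∀ u, f u = D → u = v
  · exact Or.inr (Or.inr ⟨f, D, a2, a3, b1, b2, b3, h, fun u => ⟨hr u, fun h => h ▸ hv⟩⟩)
  push Not at hr
  obtain ⟨r, hrD, hrv⟩ := hr
  obtain ⟨P, hP⟩ := fresh f
  obtain ⟨nd, cD, c2, c3, d1, d2, d3, t11, t12, t13, t21, t22, t23, t31, t32, t33⟩ := h
  simp only [List.nodup_cons, List.mem_cons, List.not_mem_nil, or_false, not_or] at nd
  have pf : ∀ i, Cn G f i → i ≠ P := fun i hi => by
    obtain ⟨u, hu⟩ := hi.ne; rintro rfl; exact hP u hu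
  have n0 := pf _ cD
  have n2 := pf _ c2
  have n3 := pf _ c3
  have n4 := pf _ d1
  have n5 := pf _ d2
  have n6 := pf _ d3
  obtain ⟨p, f1, hp, hpv, hf1p, hf1, kD, kP, tDP, kC, kT, kO⟩ := split cD hv hrD hrv hP
  have v1 : f1 v = D := by rw [hf1 v (Ne.symm hpv), hv]
  replace c2 := kC a2 (by grind) c2
  replace c3 := kC a3 (by grind) c3
  replace d1 := kC b1 (by grind) d1
  replace d2 := kC b2 (by grind) d2
  replace d3 := kC b3 (by grind) d3
  replace t21 := kT _ _ (by grind) (by grind) t21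
  replace t22 := kT _ _ (by grind) (by grind) t22
  replace t23 := kT _ _ (by grind) (by grind) t23
  replace t31 := kT _ _ (by grind) (by grind) t31
  replace t32 := kT _ _ (by grind) (by grind) t32
  replace t33 := kT _ _ (by grind) (by grind) t33
  replace t11 := kO b1 (by grind) t11
  replace t12 := kO b2 (by grind) t12
  replace t13 := kO b3 (by grind) t13
  clear kC kT kO pf
  have card : ∀ c, c ≠ D → {u | mg f1 P c u = D}.ncard < n := by
    intro c hc
    rw [← hn]
    apply fiber_lt hp
    · simp only [mg, hf1p, if_true]; exact hc
    · intro u hu h; rw [← hf1 u hu]; simp only [mg] at h; split_ifs at h; exact absurd h hc; exact h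
  have two : ∀ x y z, [P, D, a2, a3, x, y, z].Nodup → Cn G f1 x → Cn G f1 y → Cn G f1 z →
      Tc G f1 a2 x → Tc G f1 a2 y → Tc G f1 a2 z → Tc G f1 a3 x → Tc G f1 a3 y → Tc G f1 a3 z →
      Tc G f1 D x → Tc G f1 P y → Tc G f1 P z → Out1 G v ∨ Out2 G v ∨ Out3 G v := by
    intro x y z nd' cx cy cz u1 u2 u3 w1 w2 w3 e1 e2 e3
    have : Sig33 G v f1 D P a2 a3 x y z := by
      constructor <;> first | assumption | grind
    rcases sig33_out _ this rfl with h | h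
    · exact Or.inl h
    · exact Or.inr (Or.inl h)
  have one : ∀ x y z, [P, D, a2, a3, x, y, z].Nodup → Cn G f1 x → Cn G f1 y → Cn G f1 z →
      Tc G f1 a2 x → Tc G f1 a2 y → Tc G f1 a2 z → Tc G f1 a3 x → Tc G f1 a3 y → Tc G f1 a3 z →
      Tc G f1 P x → Tc G f1 D y → Tc G f1 D z → Out1 G v ∨ Out2 G v ∨ Out3 G v := by
    intro x y z nd' cx cy cz u1 u2 u3 w1 w2 w3 e1 e2 e3
    simp only [List.nodup_cons, List.mem_cons, List.not_mem_nil, or_false, not_or] at nd'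
    refine ih _ (card x (by clear * - nd nd'; grind)) (f := mg f1 P x) (a1 := D) (a2 := a2) (a3 := a3) (b1 := x)
      (b2 := y) (b3 := z) ?_ ?_ rfl
    · constructor
      · clear * - nd nd' n0 n2 n3 n4 n5 n6; grind
      · apply mg_cn <;> first | assumption | (clear * - nd nd' n0 n2 n3 n4 n5 n6; grind)
      · apply mg_cn <;> first | assumption | (clear * - nd nd' n0 n2 n3 n4 n5 n6; grind)
      · apply mg_cn <;> first | assumption | (clear * - nd nd' n0 n2 n3 n4 n5 n6; grind)
      · apply mg_cn' <;> assumption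
      · apply mg_cn <;> first | assumption | (clear * - nd nd' n0 n2 n3 n4 n5 n6; grind)
      · apply mg_cn <;> first | assumption | (clear * - nd nd' n0 n2 n3 n4 n5 n6; grind)
      · apply Tc.symm; apply mg_tc'; exact tDP.symm; (clear * - nd nd' n0 n2 n3 n4 n5 n6; grind)
      all_goals apply mg_tc <;> first | assumption | (clear * - nd nd' n0 n2 n3 n4 n5 n6; grind)
    · simp only [mg, v1]; clear * - nd nd' n0 n2 n3 n4 n5 n6; grind
  by_cases q1 : Tc G f1 P b1 <;> by_cases q2 : Tc G f1 P b2 <;> by_cases q3 : Tc G f1 P b3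
  · left
    refine ⟨f1, P, a2, a3, b1, b2, b3, ?_, ?_⟩
    · constructor <;> first | assumption | (clear * - nd n0 n2 n3 n4 n5 n6; grind) | (clear ih card two one; grind)
    · rw [v1]; simp only [List.mem_cons, List.not_mem_nil, or_false, not_or]; clear * - nd n0 n2 n3 n4 n5 n6; grind
  · apply two b3 b1 b2 <;> first | assumption | (clear * - nd n0 n2 n3 n4 n5 n6; grind) | (clear ih card two one; grind)
  · apply two b2 b1 b3 <;> first | assumption | (clear * - nd n0 n2 n3 n4 n5 n6; grind) | (clear ih card two one; grind)
  · apply one b1 b2 b3 <;> first | assumption | (clear * - nd n0 n2 n3 n4 n5 n6; grind) | (clear ih card two one; grind)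
  · apply two b1 b2 b3 <;> first | assumption | (clear * - nd n0 n2 n3 n4 n5 n6; grind) | (clear ih card two one; grind)
  · apply one b2 b1 b3 <;> first | assumption | (clear * - nd n0 n2 n3 n4 n5 n6; grind) | (clear ih card two one; grind)
  · apply one b3 b1 b2 <;> first | assumption | (clear * - nd n0 n2 n3 n4 n5 n6; grind) | (clear ih card two one; grind)
  · refine ih {u | f1 u = D}.ncard ?_ (f := f1) (a1 := D) (a2 := a2) (a3 := a3)
        (b1 := b1) (b2 := b2) (b3 := b3) ?_ v1 rfl
    · rw [← hn]
      apply fiber_lt hp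
      · rw [hf1p]; exact n0.symm
      · intro u hu h; rw [← hf1 u hu]; exact h
    · constructor <;> first | assumption | (clear * - nd n0 n2 n3 n4 n5 n6; grind) | (clear ih card two one; grind)

lemma k33_cases (v : V) (h : IsMinor K33 G) : Out1 G v ∨ Out2 G v ∨ Out3 G v := by
  obtain ⟨f, hf, -⟩ := exists_k33L h
  by_cases hv : f v ∈ [0, 1, 2, 3, 4, 5]
  · simp only [List.mem_cons, List.not_mem_nil, or_false] at hv
    rcases hv with hv | hv | hv | hv | hv | hv
    · exact k33_out _ hf hv rfl
    · exact k33_out _ hf.rotA hv rfl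
    · exact k33_out _ hf.rotA.rotA hv rfl
    · exact k33_out _ hf.swap hv rfl
    · exact k33_out _ hf.swap.rotA hv rfl
    · exact k33_out _ hf.swap.rotA.rotA hv rfl
  · exact Or.inl ⟨f, _, _, _, _, _, _, hf, hv⟩

end k33


section k5
variable {V : Type} [Finite V] {G : SimpleGraph V}

lemma cn_congr {f f2 : V → ℕ} {i : ℕ} (h : ∀ u, f2 u = i ↔ f u = i) (hc : Cn G f i) :
    Cn G f2 i := conn_congr G (Set.ext h) hc

lemma tc_mono {f f2 : V → ℕ} {i j : ℕ} (h : ∀ u, f u = i → f2 u = i)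
    (h' : ∀ u, f u = j → f2 u = j) (ht : Tc G f i j) : Tc G f2 i j := by
  obtain ⟨u, w, hu, hw, ha⟩ := ht
  exact ⟨u, w, h u hu, h' w hw, ha⟩

/-- a labelled `K5` model -/
structure K5L (G : SimpleGraph V) (f : V → ℕ) (a b c d e : ℕ) : Prop where
  nd : [a, b, c, d, e].Nodup
  ca : Cn G f a
  cb : Cn G f b
  cc : Cn G f c
  cd : Cn G f d
  ce : Cn G f e
  tab : Tc G f a b
  tac : Tc G f a c
  tad : Tc G f a d
  tae : Tc G f a e
  tbc : Tc G f b c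
  tbd : Tc G f b d
  tbe : Tc G f b e
  tcd : Tc G f c d
  tce : Tc G f c e
  tde : Tc G f d e

/-- a labelled `K5` model in which the pair `a b` may be joined through the class `D` of `v` -/
structure S5 (G : SimpleGraph V) (v : V) (f : V → ℕ) (D a b c d e : ℕ) : Prop where
  nd : [D, a, b, c, d, e].Nodup
  hv : f v = D
  cD : Cn G f D
  ca : Cn G f a
  cb : Cn G f b
  cc : Cn G f c
  cd : Cn G f d
  ce : Cn G f e
  tac : Tc G f a c
  tad : Tc G f a d
  tae : Tc G f a e
  tbc : Tc G f b c
  tbd : Tc G f b d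
  tbe : Tc G f b e
  tcd : Tc G f c d
  tce : Tc G f c e
  tde : Tc G f d e
  tab : Tc G f a b ∨ Tc G f D a ∧ Tc G f D b

variable {v : V} {f : V → ℕ} {D a b c d e : ℕ}

lemma K5L.s01 (h : K5L G f a b c d e) : K5L G f b a c d e := by
  obtain ⟨nd, ca, cb, cc, cd, ce, tab, tac, tad, tae, tbc, tbd, tbe, tcd, tce, tde⟩ := h
  constructor <;> first | assumption | (apply Tc.symm; assumption) | (clear * - nd; grind)

lemma K5L.s12 (h : K5L G f a b c d e) : K5L G f a c b d e := by
  obtain ⟨nd, ca, cb, cc, cd, ce, tab, tac, tad, tae, tbc, tbd, tbe, tcd, tce, tde⟩ := h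
  constructor <;> first | assumption | (apply Tc.symm; assumption) | (clear * - nd; grind)

lemma K5L.s23 (h : K5L G f a b c d e) : K5L G f a b d c e := by
  obtain ⟨nd, ca, cb, cc, cd, ce, tab, tac, tad, tae, tbc, tbd, tbe, tcd, tce, tde⟩ := h
  constructor <;> first | assumption | (apply Tc.symm; assumption) | (clear * - nd; grind)

lemma K5L.s34 (h : K5L G f a b c d e) : K5L G f a b c e d := by
  obtain ⟨nd, ca, cb, cc, cd, ce, tab, tac, tad, tae, tbc, tbd, tbe, tcd, tce, tde⟩ := h
  constructor <;> first | assumption | (apply Tc.symm; assumption) | (clear * - nd; grind)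

lemma S5.s01 (h : S5 G v f D a b c d e) : S5 G v f D b a c d e := by
  obtain ⟨nd, hv, cD, ca, cb, cc, cd, ce, tac, tad, tae, tbc, tbd, tbe, tcd, tce, tde, tab⟩ := h
  constructor <;> first | assumption | (apply Tc.symm; assumption) | (clear * - nd; grind) | skip
  exact tab.imp Tc.symm And.symm

lemma S5.s23 (h : S5 G v f D a b c d e) : S5 G v f D a b d c e := by
  obtain ⟨nd, hv, cD, ca, cb, cc, cd, ce, tac, tad, tae, tbc, tbd, tbe, tcd, tce, tde, tab⟩ := h
  constructor <;> first | assumption | (apply Tc.symm; assumption) | (clear * - nd; grind)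

lemma S5.s34 (h : S5 G v f D a b c d e) : S5 G v f D a b c e d := by
  obtain ⟨nd, hv, cD, ca, cb, cc, cd, ce, tac, tad, tae, tbc, tbd, tbe, tcd, tce, tde, tab⟩ := h
  constructor <;> first | assumption | (apply Tc.symm; assumption) | (clear * - nd; grind)

lemma S5.full (h : S5 G v f D a b c d e) (t : Tc G f a b) : K5L G f a b c d e := by
  obtain ⟨nd, hv, cD, ca, cb, cc, cd, ce, tac, tad, tae, tbc, tbd, tbe, tcd, tce, tde, tab⟩ := h
  constructor <;> first | assumption | (clear * - nd; grind)

lemma K5L.toS5 (h : K5L G f a b c d e) (hv : f v = D) (cD : Cn G f D)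
    (hD : D ∉ [a, b, c, d, e]) : S5 G v f D a b c d e := by
  obtain ⟨nd, ca, cb, cc, cd, ce, tab, tac, tad, tae, tbc, tbd, tbe, tcd, tce, tde⟩ := h
  constructor <;> first | assumption | (exact Or.inl tab) | (exact List.nodup_cons.2 ⟨hD, nd⟩)

lemma sort4 {R : ℕ → ℕ → ℕ → ℕ → Prop} (p : ℕ → Prop)
    (h1 : ∀ x y z w, R x y z w → R y x z w) (h2 : ∀ x y z w, R x y z w → R x z y w)
    (h3 : ∀ x y z w, R x y z w → R x y w z) {x y z w : ℕ} (h : R x y z w) :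
    ∃ x y z w, R x y z w ∧ (p y → p x) ∧ (p z → p y) ∧ (p w → p z) := by
  by_cases q1 : p x <;> by_cases q2 : p y <;> by_cases q3 : p z <;> by_cases q4 : p w
  · exact ⟨x, y, z, w, h, by tauto⟩
  · exact ⟨x, y, z, w, h, by tauto⟩
  · exact ⟨x, y, w, z, h3 _ _ _ _ h, by tauto⟩
  · exact ⟨x, y, z, w, h, by tauto⟩
  · exact ⟨x, z, w, y, h3 _ _ _ _ (h2 _ _ _ _ h), by tauto⟩
  · exact ⟨x, z, y, w, h2 _ _ _ _ h, by tauto⟩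
  · exact ⟨x, w, y, z, h2 _ _ _ _ (h3 _ _ _ _ h), by tauto⟩
  · exact ⟨x, y, z, w, h, by tauto⟩
  · exact ⟨y, z, w, x, h3 _ _ _ _ (h2 _ _ _ _ (h1 _ _ _ _ h)), by tauto⟩
  · exact ⟨y, z, x, w, h2 _ _ _ _ (h1 _ _ _ _ h), by tauto⟩
  · exact ⟨y, w, x, z, h2 _ _ _ _ (h3 _ _ _ _ (h1 _ _ _ _ h)), by tauto⟩
  · exact ⟨y, x, z, w, h1 _ _ _ _ h, by tauto⟩
  · exact ⟨z, w, x, y, h2 _ _ _ _ (h3 _ _ _ _ (h1 _ _ _ _ (h2 _ _ _ _ h))), by tauto⟩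
  · exact ⟨z, x, y, w, h1 _ _ _ _ (h2 _ _ _ _ h), by tauto⟩
  · exact ⟨w, x, y, z, h1 _ _ _ _ (h2 _ _ _ _ (h3 _ _ _ _ h)), by tauto⟩
  · exact ⟨x, y, z, w, h, by tauto⟩

lemma sort3 {R : ℕ → ℕ → ℕ → Prop} (p : ℕ → Prop)
    (h1 : ∀ x y z, R x y z → R y x z) (h2 : ∀ x y z, R x y z → R x z y)
    {x y z : ℕ} (h : R x y z) :
    ∃ x y z, R x y z ∧ (p y → p x) ∧ (p z → p y) := by
  by_cases q1 : p x <;> by_cases q2 : p y <;> by_cases q3 : p z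
  · exact ⟨x, y, z, h, by tauto⟩
  · exact ⟨x, y, z, h, by tauto⟩
  · exact ⟨x, z, y, h2 _ _ _ h, by tauto⟩
  · exact ⟨x, y, z, h, by tauto⟩
  · exact ⟨y, z, x, h2 _ _ _ (h1 _ _ _ h), by tauto⟩
  · exact ⟨y, x, z, h1 _ _ _ h, by tauto⟩
  · exact ⟨z, x, y, h1 _ _ _ (h2 _ _ _ h), by tauto⟩
  · exact ⟨x, y, z, h, by tauto⟩

/-- the class `D` touches three labels -/
lemma S5.three (h : S5 G v f D a b c d e) (h1 : Tc G f D a) (h2 : Tc G f D b)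
    (h3 : Tc G f D c) : IsMinor K33 G := by
  obtain ⟨nd, hv, cD, ca, cb, cc, cd, ce, tac, tad, tae, tbc, tbd, tbe, tcd, tce, tde, tab⟩ := h
  apply K33L.minor (f := f) (a1 := D) (a2 := d) (a3 := e) (b1 := a) (b2 := b) (b3 := c)
  constructor <;> first | assumption | (apply Tc.symm; assumption) | (clear * - nd; grind)

/-- result of splitting a vertex off the class `a` -/
lemma K5L.split (h : K5L G f a b c d e) {q r : V} (hq : f q = a) (hr : f r = a) (hrq : r ≠ q) :
    ∃ p P f1 x y z w, K5L G f a x y z w ∧ (∀ u, f u ≠ P) ∧ f p = a ∧ p ≠ q ∧ f1 p = P ∧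
      (∀ u, u ≠ p → f1 u = f u) ∧ [P, a, x, y, z, w].Nodup ∧ Cn G f1 P ∧ Cn G f1 a ∧ Cn G f1 x ∧
      Cn G f1 y ∧ Cn G f1 z ∧ Cn G f1 w ∧ Tc G f1 a P ∧ Tc G f1 x y ∧ Tc G f1 x z ∧
      Tc G f1 x w ∧ Tc G f1 y z ∧ Tc G f1 y w ∧ Tc G f1 z w ∧
      (Tc G f1 a x ∨ Tc G f1 P x) ∧ (Tc G f1 a y ∨ Tc G f1 P y) ∧ (Tc G f1 a z ∨ Tc G f1 P z) ∧
      (Tc G f1 a w ∨ Tc G f1 P w) ∧ (Tc G f1 P y → Tc G f1 P x) ∧ (Tc G f1 P z → Tc G f1 P y) ∧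
      (Tc G f1 P w → Tc G f1 P z) ∧ (∀ i, i ≠ a → Cn G f i → Cn G f1 i) ∧
      (∀ i ∈ [a, x, y, z, w], i ∈ [a, b, c, d, e]) := by
  obtain ⟨P, hP⟩ := fresh f
  obtain ⟨p, f1, hp, hpv, hf1p, hf1, ka, kP, taP, kC, kT, kO⟩ := S8.split h.ca hq hr hrq hP
  obtain ⟨x, y, z, w, hR, s1, s2, s3⟩ := sort4
    (R := fun x y z w => K5L G f a x y z w ∧ ∀ i ∈ [a, x, y, z, w], i ∈ [a, b, c, d, e])
    (fun i => Tc G f1 P i)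
    (fun _ _ _ _ h => ⟨h.1.s12, fun i hi => h.2 i (by clear * - hi; grind)⟩)
    (fun _ _ _ _ h => ⟨h.1.s23, fun i hi => h.2 i (by clear * - hi; grind)⟩)
    (fun _ _ _ _ h => ⟨h.1.s34, fun i hi => h.2 i (by clear * - hi; grind)⟩) ⟨h, fun _ h => h⟩
  obtain ⟨hR, hmem⟩ := hR
  have hR' := hR
  obtain ⟨nd, ca, cb, cc, cd, ce, tab, tac, tad, tae, tbc, tbd, tbe, tcd, tce, tde⟩ := hR
  have nd' := nd
  simp only [List.nodup_cons, List.mem_cons, List.not_mem_nil, or_false, not_or] at nd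
  obtain ⟨⟨m1, m2, m3, m4⟩, -⟩ := nd
  have pf : ∀ i, Cn G f i → P ≠ i := fun i hi => by
    obtain ⟨u, hu⟩ := hi.ne; rintro rfl; exact hP u hu
  have n1 := pf _ ca
  have n2 := pf _ cb
  have n3 := pf _ cc
  have n4 := pf _ cd
  have n5 := pf _ ce
  refine ⟨p, P, f1, x, y, z, w, hR', hP, hp, hpv, hf1p, hf1, ?_, kP, ka, kC _ (Ne.symm m1) cb, kC _ (Ne.symm m2) cc,
    kC _ (Ne.symm m3) cd, kC _ (Ne.symm m4) ce, taP, kT _ _ (Ne.symm m1) (Ne.symm m2) tbc,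
    kT _ _ (Ne.symm m1) (Ne.symm m3) tbd, kT _ _ (Ne.symm m1) (Ne.symm m4) tbe,
    kT _ _ (Ne.symm m2) (Ne.symm m3) tcd, kT _ _ (Ne.symm m2) (Ne.symm m4) tce,
    kT _ _ (Ne.symm m3) (Ne.symm m4) tde, kO _ (Ne.symm m1) tab, kO _ (Ne.symm m2) tac,
    kO _ (Ne.symm m3) tad, kO _ (Ne.symm m4) tae, s1, s2, s3, kC, hmem⟩
  rw [List.nodup_cons]
  refine ⟨?_, nd'⟩
  simp only [List.mem_cons, List.not_mem_nil, or_false, not_or]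
  exact ⟨n1, n2, n3, n4, n5⟩

/-- phase one: reach an `S5` -/
lemma phase1 {x y z : V} (hN : ∀ u, G.Adj v u → u = x ∨ u = y ∨ u = z) (hn : ¬ IsMinor K33 G)
    (n : ℕ) : ∀ {f : V → ℕ} {a b c d e : ℕ}, K5L G f a b c d e → f v = a →
    {u | f u = a}.ncard = n → ∃ f D a b c d e, S5 G v f D a b c d e := by
  induction n using Nat.strong_induction_on with
  | _ n ih =>
  intro f a b c d e h hv hn'
  by_cases hr : ∀ u, f u = a → u = v
  · exfalso
    obtain ⟨nd, ca, cb, cc, cd, ce, tab, tac, tad, tae, tbc, tbd, tbe, tcd, tce, tde⟩ := h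
    have key : ∀ i, Tc G f a i → i = f x ∨ i = f y ∨ i = f z := by
      rintro i ⟨u, w, hu, hw, ha⟩
      rw [hr u hu] at ha
      rcases hN w ha with rfl | rfl | rfl <;> simp [hw]
    have k1 := key _ tab
    have k2 := key _ tac
    have k3 := key _ tad
    have k4 := key _ tae
    simp only [List.nodup_cons, List.mem_cons, List.not_mem_nil, or_false, not_or] at nd
    clear * - nd k1 k2 k3 k4
    omega
  push Not at hr
  obtain ⟨r, hra, hrv⟩ := hr
  obtain ⟨p, P, f1, x, y, z, w, hR, hP, hp, hpv, hf1p, hf1, nd, cP, ca, cx, cy, cz, cw, taP, txy, txz,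
    txw, tyz, tyw, tzw, ox, oy, oz, ow, s1, s2, s3, -, -⟩ := h.split hv hra hrv
  have v1 : f1 v = a := by rw [hf1 v (Ne.symm hpv), hv]
  have nd' := nd
  simp only [List.nodup_cons, List.mem_cons, List.not_mem_nil, or_false, not_or] at nd'
  have tPa := taP.symm
  by_cases q3 : Tc G f1 P z
  · have q2 := s2 q3
    have q1 := s1 q2
    refine ⟨f1, a, P, w, x, y, z, ?_⟩
    clear ih
    constructor <;> first | assumption | (apply Tc.symm; assumption) | (clear * - nd; grind) | skip
    rcases ow with h | h
    · exact Or.inr ⟨taP, h⟩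
    · exact Or.inl h
  · have q4 : ¬ Tc G f1 P w := fun h => q3 (s3 h)
    replace oz := oz.resolve_right q3
    replace ow := ow.resolve_right q4
    by_cases q2 : Tc G f1 P y
    · have q1 := s1 q2
      exfalso
      apply hn
      apply K33L.minor (f := f1) (a1 := P) (a2 := z) (a3 := w) (b1 := a) (b2 := x) (b3 := y)
      clear ih
      constructor <;> first | assumption | (apply Tc.symm; assumption) | (clear * - nd; grind)
    · replace oy := oy.resolve_right q2
      by_cases q1 : Tc G f1 P x
      · refine ih {u | mg f1 P x u = a}.ncard ?_ (f := mg f1 P x) (a := a) (b := x) (c := y) (d := z)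
          (e := w) ?_ ?_ rfl
        · rw [← hn']
          apply fiber_lt hp
          · simp only [mg, hf1p, if_true]; clear * - nd'; grind
          · intro u hu h; rw [← hf1 u hu]; simp only [mg] at h; split_ifs at h;
            · clear * - h nd'; grind
            · exact h
        · clear ih
          constructor
          · clear * - nd; grind
          · apply mg_cn <;> first | assumption | (clear * - nd'; grind)
          · apply mg_cn' <;> assumption
          · apply mg_cn <;> first | assumption | (clear * - nd'; grind)
          · apply mg_cn <;> first | assumption | (clear * - nd'; grind)
          · apply mg_cn <;> first | assumption | (clear * - nd'; grind)
          · apply Tc.symm; apply mg_tc' <;> first | assumption | (clear * - nd'; grind)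
          all_goals apply mg_tc <;> first | assumption | (clear * - nd'; grind)
        · simp only [mg, v1]; clear * - nd'; grind
      · replace ox := ox.resolve_right q1
        refine ih {u | f1 u = a}.ncard ?_ (f := f1) (a := a) (b := x) (c := y) (d := z)
          (e := w) ?_ v1 rfl
        · rw [← hn']
          apply fiber_lt hp
          · rw [hf1p]; clear * - nd'; grind
          · intro u hu h; rw [← hf1 u hu]; exact h
        · clear ih
          constructor <;> first | assumption | (clear * - nd; grind)

end k5


section k5b
variable {V : Type} [Finite V] {G : SimpleGraph V}
variable {v : V} {f : V → ℕ} {D a b c d e : ℕ}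

lemma stepI (hn : ¬ IsMinor K33 G) (h : S5 G v f D a b c d e) (hDb : Tc G f D b) {q r s : V}
    (hq : f q = a) (hs : f s = D) (hqs : G.Adj q s) (hr : f r = a) (hrq : r ≠ q) :
    (∃ f' D' a' b' c' d' e', S5 G v f' D' a' b' c' d' e' ∧
      {u | f u = D}.ncard < {u | f' u = D'}.ncard) ∨
    (∃ f' c' d' e', S5 G v f' D a b c' d' e' ∧ Tc G f' D a ∧ Tc G f' D b ∧
      {u | f' u = D}.ncard = {u | f u = D}.ncard ∧ {u | f' u = a}.ncard < {u | f u = a}.ncard ∧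
      {u | f' u = b}.ncard = {u | f u = b}.ncard) := by
  obtain ⟨P, hP⟩ := fresh f
  obtain ⟨p, f1, hp, hpq, hf1p, hf1, ka, kP, taP, kC, kT, kO⟩ := S8.split h.ca hq hr hrq hP
  obtain ⟨x, y, z, hR, s1, s2⟩ := sort3 (R := fun x y z => S5 G v f D a b x y z)
    (fun i => Tc G f1 P i) (fun _ _ _ h => h.s23) (fun _ _ _ h => h.s34) h
  obtain ⟨nd, hv, cD, ca, cb, cx, cy, cz, tax, tay, taz, tbx, tby, tbz, txy, txz, tyz, tab⟩ := hR
  have nd' := nd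
  simp only [List.nodup_cons, List.mem_cons, List.not_mem_nil, or_false, not_or] at nd'
  have pf : ∀ i, Cn G f i → P ≠ i := fun i hi => by
    obtain ⟨u, hu⟩ := hi.ne; rintro rfl; exact hP u hu
  have n0 := pf _ cD
  have n1 := pf _ ca
  have n2 := pf _ cb
  have n3 := pf _ cx
  have n4 := pf _ cy
  have n5 := pf _ cz
  have ndP : [P, D, a, b, x, y, z].Nodup := by
    rw [List.nodup_cons]
    refine ⟨?_, nd⟩
    simp only [List.mem_cons, List.not_mem_nil, or_false, not_or]
    exact ⟨n0, n1, n2, n3, n4, n5⟩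
  obtain ⟨⟨m0, m1, m2, m3, m4⟩, ⟨l1, l2, l3, l4⟩, -⟩ := nd'
  have hsp : s ≠ p := by rintro rfl; exact m0 (hs.symm.trans hp)
  have f1s : f1 s = D := by rw [hf1 s hsp, hs]
  have f1q : f1 q = a := by rw [hf1 q (Ne.symm hpq), hq]
  have hvp : v ≠ p := by rintro rfl; exact m0 (hv.symm.trans hp)
  have f1v : f1 v = D := by rw [hf1 v hvp, hv]
  have tDa : Tc G f1 D a := ⟨s, q, f1s, f1q, hqs.symm⟩
  have taD := tDa.symm
  have fibD : ∀ u, f1 u = D ↔ f u = D := by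
    intro u
    by_cases hu : u = p
    · subst hu; rw [hf1p, hp]; constructor <;> intro h
      · exact absurd h n0
      · exact absurd h.symm m0
    · rw [hf1 u hu]
  have fibb : ∀ u, f1 u = b ↔ f u = b := by
    intro u
    by_cases hu : u = p
    · subst hu; rw [hf1p, hp]; constructor <;> intro h
      · exact absurd h n2
      · exact absurd h l1
    · rw [hf1 u hu]
  replace cD := kC _ m0 cD
  replace cb := kC _ (Ne.symm l1) cb
  replace cx := kC _ (Ne.symm l2) cx
  replace cy := kC _ (Ne.symm l3) cy
  replace cz := kC _ (Ne.symm l4) cz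
  replace tax := kO _ (Ne.symm l2) tax
  replace tay := kO _ (Ne.symm l3) tay
  replace taz := kO _ (Ne.symm l4) taz
  replace tbx := kT _ _ (Ne.symm l1) (Ne.symm l2) tbx
  replace tby := kT _ _ (Ne.symm l1) (Ne.symm l3) tby
  replace tbz := kT _ _ (Ne.symm l1) (Ne.symm l4) tbz
  replace txy := kT _ _ (Ne.symm l2) (Ne.symm l3) txy
  replace txz := kT _ _ (Ne.symm l2) (Ne.symm l4) txz
  replace tyz := kT _ _ (Ne.symm l3) (Ne.symm l4) tyz
  replace hDb := kT _ _ m0 (Ne.symm l1) hDb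
  clear kC kT kO pf tab
  have nd' := ndP
  simp only [List.nodup_cons, List.mem_cons, List.not_mem_nil, or_false, not_or] at nd'
  by_cases q3 : Tc G f1 P z
  · left
    have q2 := s2 q3
    have q1 := s1 q2
    refine ⟨mg f1 a D, D, P, b, x, y, z, ?_, ?_⟩
    · constructor
      · clear * - ndP; grind
      · simp only [mg, f1v]; clear * - nd'; grind
      · apply mg_cn' <;> assumption
      · apply mg_cn <;> first | assumption | (clear * - nd'; grind)
      · apply mg_cn <;> first | assumption | (clear * - nd'; grind)
      · apply mg_cn <;> first | assumption | (clear * - nd'; grind)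
      · apply mg_cn <;> first | assumption | (clear * - nd'; grind)
      · apply mg_cn <;> first | assumption | (clear * - nd'; grind)
      iterate 9 · apply mg_tc <;> first | assumption | (clear * - nd'; grind)
      · right
        constructor
        · apply mg_tc' <;> first | assumption | (clear * - nd'; grind)
        · apply mg_tc <;> first | assumption | (clear * - nd'; grind)
    · apply fiber_lt (p := q)
      · simp [mg, f1q]
      · rw [hq]; exact Ne.symm m0
      · intro u hu h
        rw [← fibD] at h
        simp [mg, h]
  replace taz := taz.resolve_right q3
  by_cases q2 : Tc G f1 P y
  · exfalso
    have q1 := s1 q2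
    apply hn
    apply K33L.minor (f := mg f1 D a) (a1 := P) (a2 := b) (a3 := z) (b1 := a) (b2 := x) (b3 := y)
    constructor
    · clear * - ndP; grind
    · apply mg_cn <;> first | assumption | (clear * - nd'; grind)
    · apply mg_cn <;> first | assumption | (clear * - nd'; grind)
    · apply mg_cn <;> first | assumption | (clear * - nd'; grind)
    · apply mg_cn' <;> assumption
    · apply mg_cn <;> first | assumption | (clear * - nd'; grind)
    · apply mg_cn <;> first | assumption | (clear * - nd'; grind)
    · apply mg_tc <;> first | assumption | (apply Tc.symm; assumption) | (clear * - nd'; grind)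
    · apply mg_tc <;> first | assumption | (apply Tc.symm; assumption) | (clear * - nd'; grind)
    · apply mg_tc <;> first | assumption | (apply Tc.symm; assumption) | (clear * - nd'; grind)
    · apply Tc.symm; apply mg_tc' <;> first | assumption | (clear * - nd'; grind)
    all_goals
      apply mg_tc <;> first | assumption | (apply Tc.symm; assumption) | (clear * - nd'; grind)
  right
  replace tay := tay.resolve_right q2
  by_cases q1 : Tc G f1 P x
  · refine ⟨mg f1 P x, x, y, z, ?_, ?_, ?_, ?_, ?_, ?_⟩
    · constructor
      · clear * - ndP; grind
      · simp only [mg, f1v]; clear * - nd'; grind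
      · apply mg_cn <;> first | assumption | (clear * - nd'; grind)
      · apply mg_cn <;> first | assumption | (clear * - nd'; grind)
      · apply mg_cn <;> first | assumption | (clear * - nd'; grind)
      · apply mg_cn' <;> assumption
      · apply mg_cn <;> first | assumption | (clear * - nd'; grind)
      · apply mg_cn <;> first | assumption | (clear * - nd'; grind)
      · apply Tc.symm; apply mg_tc' <;>
          first | assumption | (apply Tc.symm; assumption) | (clear * - nd'; grind)
      iterate 8 · apply mg_tc <;> first | assumption | (clear * - nd'; grind)
      · right; constructor <;> apply mg_tc <;> first | assumption | (clear * - nd'; grind)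
    · apply mg_tc <;> first | assumption | (clear * - nd'; grind)
    · apply mg_tc <;> first | assumption | (clear * - nd'; grind)
    · congr 1; ext u; simp only [Set.mem_setOf_eq, mg, ← fibD]; clear * - nd'; grind
    · apply fiber_lt hp
      · simp only [mg, hf1p]; clear * - nd'; grind
      · intro u hu h; rw [← hf1 u hu]; simp only [mg] at h; clear * - h nd'; grind
    · congr 1; ext u; simp only [Set.mem_setOf_eq, mg, ← fibb]; clear * - nd'; grind
  · replace tax := tax.resolve_right q1
    refine ⟨f1, x, y, z, ?_, ?_, ?_, ?_, ?_, ?_⟩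
    · constructor <;> first | assumption | exact Or.inr ⟨tDa, hDb⟩
    · assumption
    · assumption
    · congr 1; ext u; exact fibD u
    · apply fiber_lt hp
      · rw [hf1p]; exact n1
      · intro u hu h; rw [← hf1 u hu]; exact h
    · congr 1; ext u; exact fibb u

lemma stepII (hn : ¬ IsMinor K33 G) (h : K5L G f a b c d e) (hv : f v = D) (cD : Cn G f D)
    (hD : D ∉ [a, b, c, d, e]) {q r s : V}
    (hq : f q = a) (hs : f s = D) (hqs : G.Adj q s) (hr : f r = a) (hrq : r ≠ q) :
    (∃ f' D' a' b' c' d' e', S5 G v f' D' a' b' c' d' e' ∧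
      {u | f u = D}.ncard < {u | f' u = D'}.ncard) ∨
    (∃ f' b' c' d' e', K5L G f' a b' c' d' e' ∧ Tc G f' D a ∧ Cn G f' D ∧ f' v = D ∧
      D ∉ [a, b', c', d', e'] ∧
      {u | f' u = D}.ncard = {u | f u = D}.ncard ∧ {u | f' u = a}.ncard < {u | f u = a}.ncard) := by
  obtain ⟨p, P, f1, x, y, z, w, hR, hP, hp, hpq, hf1p, hf1, nd, cP, ca, cx, cy, cz, cw, taP, txy,
    txz, txw, tyz, tyw, tzw, ox, oy, oz, ow, s1, s2, s3, kC, hmem⟩ := h.split hq hr hrq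
  have hDx : D ∉ [a, x, y, z, w] := by
    exact fun h => hD (hmem _ h)
  have n0 : D ≠ P := by rw [← hs]; exact hP s
  have hDx' := hDx
  simp only [List.mem_cons, List.not_mem_nil, or_false, not_or] at hDx'
  obtain ⟨m0, m1, m2, m3, m4⟩ := hDx'
  have hsp : s ≠ p := by rintro rfl; exact m0 (hs.symm.trans hp)
  have f1s : f1 s = D := by rw [hf1 s hsp, hs]
  have f1q : f1 q = a := by rw [hf1 q (Ne.symm hpq), hq]
  have hvp : v ≠ p := by rintro rfl; exact m0 (hv.symm.trans hp)
  have f1v : f1 v = D := by rw [hf1 v hvp, hv]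
  have tDa : Tc G f1 D a := ⟨s, q, f1s, f1q, hqs.symm⟩
  have taD := tDa.symm
  have fibD : ∀ u, f1 u = D ↔ f u = D := by
    intro u
    by_cases hu : u = p
    · subst hu; rw [hf1p, hp]; constructor <;> intro h
      · exact absurd h.symm n0
      · exact absurd h.symm m0
    · rw [hf1 u hu]
  replace cD := kC _ m0 cD
  have ndP : [D, P, a, x, y, z, w].Nodup := by
    rw [List.nodup_cons]
    refine ⟨?_, nd⟩
    simp only [List.mem_cons, List.not_mem_nil, or_false, not_or]
    exact ⟨n0, m0, m1, m2, m3, m4⟩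
  have nd' := ndP
  simp only [List.nodup_cons, List.mem_cons, List.not_mem_nil, or_false, not_or] at nd'
  have tPa := taP.symm
  clear kC
  by_cases q3 : Tc G f1 P z
  · left
    have q2 := s2 q3
    have q1 := s1 q2
    refine ⟨mg f1 a D, D, P, w, x, y, z, ?_, ?_⟩
    · constructor
      · clear * - ndP; grind
      · simp only [mg, f1v]; clear * - nd'; grind
      · apply mg_cn' <;> assumption
      · apply mg_cn <;> first | assumption | (clear * - nd'; grind)
      · apply mg_cn <;> first | assumption | (clear * - nd'; grind)
      · apply mg_cn <;> first | assumption | (clear * - nd'; grind)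
      · apply mg_cn <;> first | assumption | (clear * - nd'; grind)
      · apply mg_cn <;> first | assumption | (clear * - nd'; grind)
      iterate 9
        · apply mg_tc <;> first | assumption | (apply Tc.symm; assumption) | (clear * - nd'; grind)
      · rcases ow with h | h
        · right
          constructor <;> apply mg_tc' <;> first | assumption | (clear * - nd'; grind)
        · left
          apply mg_tc <;> first | assumption | (clear * - nd'; grind)
    · apply fiber_lt (p := q)
      · simp [mg, f1q]
      · rw [hq]; exact Ne.symm m0
      · intro u hu h
        rw [← fibD] at h
        simp [mg, h]
  have q4 : ¬ Tc G f1 P w := fun h => q3 (s3 h)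
  replace oz := oz.resolve_right q3
  replace ow := ow.resolve_right q4
  by_cases q2 : Tc G f1 P y
  · have q1 := s1 q2
    exfalso
    apply hn
    apply K33L.minor (f := f1) (a1 := P) (a2 := z) (a3 := w) (b1 := a) (b2 := x) (b3 := y)
    constructor <;> first | assumption | (apply Tc.symm; assumption) | (clear * - nd; grind)
  replace oy := oy.resolve_right q2
  right
  by_cases q1 : Tc G f1 P x
  · refine ⟨mg f1 P x, x, y, z, w, ?_, ?_, ?_, ?_, hDx, ?_, ?_⟩
    · constructor
      · clear * - nd; grind
      · apply mg_cn <;> first | assumption | (clear * - nd'; grind)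
      · apply mg_cn' <;> assumption
      · apply mg_cn <;> first | assumption | (clear * - nd'; grind)
      · apply mg_cn <;> first | assumption | (clear * - nd'; grind)
      · apply mg_cn <;> first | assumption | (clear * - nd'; grind)
      · apply Tc.symm; apply mg_tc' <;> first | assumption | (clear * - nd'; grind)
      all_goals apply mg_tc <;> first | assumption | (clear * - nd'; grind)
    · apply mg_tc <;> first | assumption | (clear * - nd'; grind)
    · apply mg_cn <;> first | assumption | (clear * - nd'; grind)
    · simp only [mg, f1v]; clear * - nd'; grind
    · congr 1; ext u; simp only [Set.mem_setOf_eq, mg, ← fibD]; clear * - nd'; grind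
    · apply fiber_lt hp
      · simp only [mg, hf1p]; clear * - nd'; grind
      · intro u hu h; rw [← hf1 u hu]; simp only [mg] at h; clear * - h nd'; grind
  · replace ox := ox.resolve_right q1
    refine ⟨f1, x, y, z, w, ?_, tDa, cD, f1v, hDx, ?_, ?_⟩
    · constructor <;> first | assumption | (clear * - nd; grind)
    · congr 1; ext u; exact fibD u
    · apply fiber_lt hp
      · rw [hf1p]; clear * - nd'; grind
      · intro u hu h; rw [← hf1 u hu]; exact h

end k5b


section k5c
variable {V : Type} [Finite V] {G : SimpleGraph V}
variable {v : V} {f : V → ℕ} {D a b c d e : ℕ}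

/-- no two vertices separate `v` from anything -/
def Lk (G : SimpleGraph V) (v : V) : Prop := ∀ (S : Set V) (a1 a2 : V), v ∈ S →
  (∀ u ∈ S, ∀ w, G.Adj u w → w ∈ S ∨ w = a1 ∨ w = a2) → ∀ w, w ∈ S ∨ w = a1 ∨ w = a2

/-- there is no `S5` with a class `D` bigger than `k` -/
def Big (G : SimpleGraph V) (v : V) (k : ℕ) : Prop := ∀ f D a b c d e,
  S5 G v f D a b c d e → k < {u | f u = D}.ncard → False

lemma term5 (hL : Lk G v) (h : S5 G v f D a b c d e) (hB : Big G v {u | f u = D}.ncard)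
    (q1 q2 : V) (hN : ∀ u w, f u = D → G.Adj u w → f w ∈ [D, a, b, c, d, e] →
      f w = D ∨ w = q1 ∨ w = q2) (h1 : f q1 ≠ e) (h2 : f q2 ≠ e) : False := by
  classical
  by_cases hw : ∃ u w, f u = D ∧ G.Adj u w ∧ f w ∉ [D, a, b, c, d, e]
  · obtain ⟨u, w, hu, huw, hw⟩ := hw
    obtain ⟨nd, hv, cD, ca, cb, cc, cd, ce, tac, tad, tae, tbc, tbd, tbe, tcd, tce, tde, tab⟩ := h
    have hw' := hw
    simp only [List.mem_cons, List.not_mem_nil, or_false, not_or] at hw'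
    have nd' := nd
    simp only [List.nodup_cons, List.mem_cons, List.not_mem_nil, or_false, not_or] at nd'
    set f' : V → ℕ := fun t => if t = w then D else f t with hf'
    have e1 : ∀ i, i ≠ f w → i ≠ D → ∀ t, f' t = i ↔ f t = i := by
      intro i hi hiD t
      simp only [hf']
      split_ifs with ht
      · subst ht; exact ⟨fun h => absurd h.symm hiD, fun h => absurd h.symm hi⟩
      · rfl
    have e2 : ∀ i, i ≠ f w → ∀ t, f t = i → f' t = i := by
      intro i hi t ht
      simp only [hf']
      split_ifs with ht'
      · subst ht'; exact absurd ht.symm hi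
      · exact ht
    have fd : {t | f' t = D} = insert w {t | f t = D} := by
      ext t; simp only [hf', Set.mem_setOf_eq, Set.mem_insert_iff]; split_ifs with h <;> simp [h]
    refine hB f' D a b c d e ?_ ?_
    · constructor
      · exact nd
      · exact e2 _ (by clear * - hw'; grind) _ hv
      · exact conn_congr G fd (conn_insert G cD hu huw)
      · exact cn_congr (e1 _ (by clear * - hw'; grind) (by clear * - nd'; grind)) ca
      · exact cn_congr (e1 _ (by clear * - hw'; grind) (by clear * - nd'; grind)) cb
      · exact cn_congr (e1 _ (by clear * - hw'; grind) (by clear * - nd'; grind)) cc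
      · exact cn_congr (e1 _ (by clear * - hw'; grind) (by clear * - nd'; grind)) cd
      · exact cn_congr (e1 _ (by clear * - hw'; grind) (by clear * - nd'; grind)) ce
      iterate 9
        · refine tc_mono (f := f) (e2 _ ?_) (e2 _ ?_) ?_ <;>
            first | assumption | (clear * - hw'; grind)
      · refine tab.imp (tc_mono (e2 _ ?_) (e2 _ ?_))
          (And.imp (tc_mono (e2 _ ?_) (e2 _ ?_)) (tc_mono (e2 _ ?_) (e2 _ ?_))) <;>
          (clear * - hw'; grind)
    · apply fiber_lt (p := w)
      · simp [hf']
      · exact fun h => hw'.1 h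
      · intro t ht h; simp [hf', ht, h]
  · push Not at hw
    obtain ⟨t, ht⟩ := h.ce.ne
    have := hL {u | f u = D} q1 q2 h.hv
      (fun u hu w huw => hN u w hu huw (hw u w hu huw)) t
    have nd := h.nd
    simp only [List.nodup_cons, List.mem_cons, List.not_mem_nil, or_false, not_or] at nd
    rcases this with h | h | h
    · have : D = e := h.symm.trans ht
      exact nd.1.2.2.2.2 this
    · subst h; exact h1 ht
    · subst h; exact h2 ht

lemma caseI (hn : ¬ IsMinor K33 G) (hL : Lk G v) (n : ℕ) :
    ∀ {f : V → ℕ} {D a b c d e : ℕ}, S5 G v f D a b c d e → Tc G f D a → Tc G f D b →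
    Big G v {u | f u = D}.ncard → {u | f u = a}.ncard + {u | f u = b}.ncard = n → False := by
  induction n using Nat.strong_induction_on with
  | _ n ih =>
  intro f D a b c d e h ha hb hB hnn
  have hc : ¬ Tc G f D c := fun hc => hn (h.three ha hb hc)
  have hd : ¬ Tc G f D d := fun hc => hn (h.s23.three ha hb hc)
  have he : ¬ Tc G f D e := fun hc => hn (h.s34.s23.three ha hb hc)
  obtain ⟨s1, q1, hs1, hq1, hsq1⟩ := ha
  obtain ⟨s2, q2, hs2, hq2, hsq2⟩ := hb
  by_cases hr : ∃ r, f r = a ∧ r ≠ q1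
  · obtain ⟨r, hr, hrq⟩ := hr
    rcases stepI hn h ⟨s2, q2, hs2, hq2, hsq2⟩ hq1 hs1 hsq1.symm hr hrq with
      ⟨f', D', a', b', c', d', e', h', hlt⟩ | ⟨f', c', d', e', h', ha', hb', hD, h1, h2⟩
    · exact hB _ _ _ _ _ _ _ h' hlt
    · exact ih _ (by omega) h' ha' hb' (hD ▸ hB) rfl
  by_cases hr2 : ∃ r, f r = b ∧ r ≠ q2
  · obtain ⟨r, hr, hrq⟩ := hr2
    rcases stepI hn h.s01 ⟨s1, q1, hs1, hq1, hsq1⟩ hq2 hs2 hsq2.symm hr hrq with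
      ⟨f', D', a', b', c', d', e', h', hlt⟩ | ⟨f', c', d', e', h', ha', hb', hD, h1, h2⟩
    · exact hB _ _ _ _ _ _ _ h' hlt
    · exact ih _ (by omega) h' ha' hb' (hD ▸ hB) rfl
  push Not at hr hr2
  have nd := h.nd
  simp only [List.nodup_cons, List.mem_cons, List.not_mem_nil, or_false, not_or] at nd
  refine term5 hL h hB q1 q2 ?_ (by rw [hq1]; clear * - nd; grind) (by rw [hq2]; clear * - nd; grind)
  intro u w hu huw hw
  simp only [List.mem_cons, List.not_mem_nil, or_false] at hw
  rcases hw with hw | hw | hw | hw | hw | hw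
  · exact Or.inl hw
  · exact Or.inr (Or.inl (hr w hw))
  · exact Or.inr (Or.inr (hr2 w hw))
  · exact absurd ⟨u, w, hu, hw, huw⟩ hc
  · exact absurd ⟨u, w, hu, hw, huw⟩ hd
  · exact absurd ⟨u, w, hu, hw, huw⟩ he

lemma caseII (hn : ¬ IsMinor K33 G) (hL : Lk G v) (n : ℕ) :
    ∀ {f : V → ℕ} {D a b c d e : ℕ}, K5L G f a b c d e → f v = D → Cn G f D →
    D ∉ [a, b, c, d, e] → Tc G f D a →
    Big G v {u | f u = D}.ncard → {u | f u = a}.ncard = n → False := by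
  induction n using Nat.strong_induction_on with
  | _ n ih =>
  intro f D a b c d e h hv cD hD ha hB hnn
  have hD' := hD
  simp only [List.mem_cons, List.not_mem_nil, or_false, not_or] at hD'
  by_cases hb : Tc G f D b
  · exact caseI hn hL _ (h.toS5 hv cD hD) ha hb hB rfl
  by_cases hc : Tc G f D c
  · exact caseI hn hL _ (h.s12.toS5 hv cD (by clear * - hD; grind)) ha hc hB rfl
  by_cases hd : Tc G f D d
  · exact caseI hn hL _ (h.s23.s12.toS5 hv cD (by clear * - hD; grind)) ha hd hB rfl
  by_cases he : Tc G f D e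
  · exact caseI hn hL _ (h.s34.s23.s12.toS5 hv cD (by clear * - hD; grind)) ha he hB rfl
  obtain ⟨s1, q1, hs1, hq1, hsq1⟩ := ha
  by_cases hr : ∃ r, f r = a ∧ r ≠ q1
  · obtain ⟨r, hr, hrq⟩ := hr
    rcases stepII hn h hv cD hD hq1 hs1 hsq1.symm hr hrq with
      ⟨f', D', a', b', c', d', e', h', hlt⟩ | ⟨f', b', c', d', e', h', ha', hcD, hv', hD2, h1, h2⟩
    · exact hB _ _ _ _ _ _ _ h' hlt
    · exact ih _ (by omega) h' hv' hcD hD2 ha' (h1 ▸ hB) rfl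
  push Not at hr
  have nd := h.nd
  simp only [List.nodup_cons, List.mem_cons, List.not_mem_nil, or_false, not_or] at nd
  refine term5 hL (h.toS5 hv cD hD) hB q1 q1 ?_ (by rw [hq1]; clear * - nd; grind)
    (by rw [hq1]; clear * - nd; grind)
  intro u w hu huw hw
  simp only [List.mem_cons, List.not_mem_nil, or_false] at hw
  rcases hw with hw | hw | hw | hw | hw | hw
  · exact Or.inl hw
  · exact Or.inr (Or.inl (hr w hw))
  · exact absurd ⟨u, w, hu, hw, huw⟩ hb
  · exact absurd ⟨u, w, hu, hw, huw⟩ hc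
  · exact absurd ⟨u, w, hu, hw, huw⟩ hd
  · exact absurd ⟨u, w, hu, hw, huw⟩ he

lemma big_all (hn : ¬ IsMinor K33 G) (hL : Lk G v) (m : ℕ) : ∀ k, Nat.card V ≤ k + m → Big G v k := by
  induction m with
  | zero =>
    intro k hk f D a b c d e h hlt
    have := Set.ncard_le_card {u | f u = D}
    omega
  | succ m ih =>
    intro k hk f D a b c d e h hlt
    have hB : Big G v {u | f u = D}.ncard := ih _ (by omega)
    rcases h.tab with t | ⟨ha, hb⟩
    · have hF := h.full t
      have nd := h.nd
      have hD : D ∉ [a, b, c, d, e] := (List.nodup_cons.1 nd).1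
      by_cases ha : Tc G f D a
      · exact caseII hn hL _ hF h.hv h.cD hD ha hB rfl
      by_cases hb : Tc G f D b
      · exact caseII hn hL _ hF.s01 h.hv h.cD (by clear * - hD; grind) hb hB rfl
      by_cases hc : Tc G f D c
      · exact caseII hn hL _ hF.s12.s01 h.hv h.cD (by clear * - hD; grind) hc hB rfl
      by_cases hd : Tc G f D d
      · exact caseII hn hL _ hF.s23.s12.s01 h.hv h.cD (by clear * - hD; grind) hd hB rfl
      by_cases he : Tc G f D e
      · exact caseII hn hL _ hF.s34.s23.s12.s01 h.hv h.cD (by clear * - hD; grind) he hB rfl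
      simp only [List.mem_cons, List.not_mem_nil, or_false, not_or] at hD
      refine term5 hL h hB v v ?_ (by rw [h.hv]; exact hD.2.2.2.2) (by rw [h.hv]; exact hD.2.2.2.2)
      intro u w hu huw hw
      simp only [List.mem_cons, List.not_mem_nil, or_false] at hw
      rcases hw with hw | hw | hw | hw | hw | hw
      · exact Or.inl hw
      · exact absurd ⟨u, w, hu, hw, huw⟩ ha
      · exact absurd ⟨u, w, hu, hw, huw⟩ hb
      · exact absurd ⟨u, w, hu, hw, huw⟩ hc
      · exact absurd ⟨u, w, hu, hw, huw⟩ hd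
      · exact absurd ⟨u, w, hu, hw, huw⟩ he
    · exact caseI hn hL _ h ha hb hB rfl

lemma exists_k5L (h : IsMinor K5 G) : ∃ f : V → ℕ, K5L G f 0 1 2 3 4 := by
  obtain ⟨f, h1, h2, h3⟩ := label_of_minor ![0, 1, 2, 3, 4]
    (by decide) 6 (by decide) h
  refine ⟨f, ?_⟩
  constructor
  · decide
  · exact h1 0
  · exact h1 1
  · exact h1 2
  · exact h1 3
  · exact h1 4
  · exact h2 0 1 (by simp [K5])
  · exact h2 0 2 (by simp [K5])
  · exact h2 0 3 (by simp [K5])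
  · exact h2 0 4 (by simp [K5])
  · exact h2 1 2 (by simp [K5])
  · exact h2 1 3 (by simp [K5])
  · exact h2 1 4 (by simp [K5])
  · exact h2 2 3 (by simp [K5])
  · exact h2 2 4 (by simp [K5])
  · exact h2 3 4 (by simp [K5])

lemma k5_to_k33 {x y z : V} (hN : ∀ u, G.Adj v u → u = x ∨ u = y ∨ u = z) (hL : Lk G v)
    (h : IsMinor K5 G) : IsMinor K33 G := by
  classical
  by_contra hn
  obtain ⟨f, hf⟩ := exists_k5L h
  have : ∃ f D a b c d e, S5 G v f D a b c d e := by
    by_cases hv : f v ∈ [0, 1, 2, 3, 4]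
    · simp only [List.mem_cons, List.not_mem_nil, or_false] at hv
      rcases hv with hv | hv | hv | hv | hv
      · exact phase1 hN hn _ hf hv rfl
      · exact phase1 hN hn _ hf.s01 hv rfl
      · exact phase1 hN hn _ hf.s12.s01 hv rfl
      · exact phase1 hN hn _ hf.s23.s12.s01 hv rfl
      · exact phase1 hN hn _ hf.s34.s23.s12.s01 hv rfl
    · obtain ⟨P, hP⟩ := fresh f
      have hv' := hv
      simp only [List.mem_cons, List.not_mem_nil, or_false, not_or] at hv'
      set f' : V → ℕ := fun u => if u = v then P else f u with hf'
      have pf : ∀ i, Cn G f i → P ≠ i := fun i hi => by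
        obtain ⟨u, hu⟩ := hi.ne; rintro rfl; exact hP u hu
      have e1 : ∀ i, Cn G f i → i ≠ f v → ∀ t, f' t = i ↔ f t = i := by
        intro i hi hiv t
        simp only [hf']
        split_ifs with ht
        · subst ht; exact ⟨fun h => absurd h (pf _ hi), fun h => absurd h.symm hiv⟩
        · rfl
      refine ⟨f', P, 0, 1, 2, 3, 4, ?_⟩
      obtain ⟨nd, ca, cb, cc, cd, ce, tab, tac, tad, tae, tbc, tbd, tbe, tcd, tce, tde⟩ := hf
      have a0 := e1 _ ca (Ne.symm hv'.1)
      have a1 := e1 _ cb (Ne.symm hv'.2.1)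
      have a2 := e1 _ cc (Ne.symm hv'.2.2.1)
      have a3 := e1 _ cd (Ne.symm hv'.2.2.2.1)
      have a4 := e1 _ ce (Ne.symm hv'.2.2.2.2)
      refine K5L.toS5 ?_ (by simp [hf']) ?_ ?_
      · refine ⟨nd, cn_congr a0 ca, cn_congr a1 cb, cn_congr a2 cc, cn_congr a3 cd, cn_congr a4 ce,
          ?_, ?_, ?_, ?_, ?_, ?_, ?_, ?_, ?_, ?_⟩
        · exact tc_mono (fun u => (a0 u).2) (fun u => (a1 u).2) tab
        · exact tc_mono (fun u => (a0 u).2) (fun u => (a2 u).2) tac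
        · exact tc_mono (fun u => (a0 u).2) (fun u => (a3 u).2) tad
        · exact tc_mono (fun u => (a0 u).2) (fun u => (a4 u).2) tae
        · exact tc_mono (fun u => (a1 u).2) (fun u => (a2 u).2) tbc
        · exact tc_mono (fun u => (a1 u).2) (fun u => (a3 u).2) tbd
        · exact tc_mono (fun u => (a1 u).2) (fun u => (a4 u).2) tbe
        · exact tc_mono (fun u => (a2 u).2) (fun u => (a3 u).2) tcd
        · exact tc_mono (fun u => (a2 u).2) (fun u => (a4 u).2) tce
        · exact tc_mono (fun u => (a3 u).2) (fun u => (a4 u).2) tde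
      · have : {t | f' t = P} = {v} := by
          ext t; simp only [hf', Set.mem_setOf_eq, Set.mem_singleton_iff]
          split_ifs with h
          · simp [h]
          · simp [h, hP]
        exact conn_congr G this (conn_single G v)
      · simp only [List.mem_cons, List.not_mem_nil, or_false, not_or]
        exact ⟨pf _ ca, pf _ cb, pf _ cc, pf _ cd, pf _ ce⟩
  obtain ⟨f, D, a, b, c, d, e, h5⟩ := this
  refine big_all hn hL (Nat.card V) 0 (by omega) f D a b c d e h5 ?_
  rw [Set.ncard_pos (Set.toFinite _)]
  exact ⟨v, h5.hv⟩

end k5c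


section cut
variable {V : Type} [Finite V] {G : SimpleGraph V}

lemma cut (h3 : KConnected G 3) (a b : V) (D : Set V) {d : V} (hd : d ∈ D) (hda : d ≠ a)
    (hdb : d ≠ b) (hN : ∀ u ∈ D, ∀ w, G.Adj u w → w ∈ D ∨ w = a ∨ w = b) (w : V) :
    w ∈ D ∨ w = a ∨ w = b := by
  by_contra hw
  push Not at hw
  obtain ⟨w1, w2, w3⟩ := hw
  have hc : (G.induce (({a, b} : Set V)ᶜ)).Connected := h3.2 _ (by
    have := Set.ncard_insert_le a {b}
    rw [Set.ncard_singleton] at this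
    omega)
  obtain ⟨s, hs, c, hc1, hc2, hadj⟩ := boundary G hc (S := D ∩ ({a, b} : Set V)ᶜ)
    Set.inter_subset_right (s0 := d) ⟨hd, by simp [hda, hdb]⟩ (c0 := w) (by simp [w2, w3])
    (fun h => w1 h.1)
  have hc1' := hc1
  simp only [Set.mem_compl_iff, Set.mem_insert_iff, Set.mem_singleton_iff, not_or] at hc1'
  rcases hN s hs.1 c hadj with h | h | h
  · exact hc2 ⟨h, hc1⟩
  · exact hc1'.1 h
  · exact hc1'.2 h

lemma bound_label (f : V → ℕ) : ∃ M, ∀ u, f u < M := by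
  obtain ⟨M, hM⟩ := (Set.finite_range f).bddAbove
  exact ⟨M + 1, fun u => Nat.lt_succ_of_le (hM ⟨u, rfl⟩)⟩

lemma plus1 {g : V → ℕ} {a1 a2 a3 b1 b2 b3 : ℕ} (h : K33L G g a1 a2 a3 b1 b2 b3) {s w : V}
    (hs : g s ∉ [a1, a2, a3, b1, b2, b3]) (hw : g w = a1) (hsw : G.Adj s w) :
    IsMinor K33plus G := by
  classical
  obtain ⟨P, hP⟩ := fresh g
  obtain ⟨nd, c1, c2, c3, d1, d2, d3, t11, t12, t13, t21, t22, t23, t31, t32, t33⟩ := h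
  simp only [List.mem_cons, List.not_mem_nil, or_false, not_or] at hs
  have pf : ∀ i, Cn G g i → i ≠ P := fun i hi => by
    obtain ⟨u, hu⟩ := hi.ne; rintro rfl; exact hP u hu
  set f' : V → ℕ := fun u => if u = s then P else g u with hf'
  have e1 : ∀ i, Cn G g i → g s ≠ i → ∀ t, f' t = i ↔ g t = i := by
    intro i hi hiv t
    simp only [hf']
    split_ifs with ht
    · subst ht; exact ⟨fun h => absurd h.symm (pf _ hi), fun h => absurd h hiv⟩
    · rfl
  have n1 := pf _ c1
  have n2 := pf _ c2
  have n3 := pf _ c3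
  have n4 := pf _ d1
  have n5 := pf _ d2
  have n6 := pf _ d3
  have x1 := e1 _ c1 hs.1
  have x2 := e1 _ c2 hs.2.1
  have x3 := e1 _ c3 hs.2.2.1
  have y1 := e1 _ d1 hs.2.2.2.1
  have y2 := e1 _ d2 hs.2.2.2.2.1
  have y3 := e1 _ d3 hs.2.2.2.2.2
  have nd' := nd
  simp only [List.nodup_cons, List.mem_cons, List.not_mem_nil, or_false, not_or] at nd'
  have tm : ∀ {i j}, (∀ t, f' t = i ↔ g t = i) → (∀ t, f' t = j ↔ g t = j) → Tc G g i j →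
      Tc G f' i j := fun hi hj ht => tc_mono (fun u => (hi u).2) (fun u => (hj u).2) ht
  have fs : f' s = P := by simp [hf']
  replace t11 := tm x1 y1 t11
  replace t12 := tm x1 y2 t12
  replace t13 := tm x1 y3 t13
  replace t21 := tm x2 y1 t21
  replace t22 := tm x2 y2 t22
  replace t23 := tm x2 y3 t23
  replace t31 := tm x3 y1 t31
  replace t32 := tm x3 y2 t32
  replace t33 := tm x3 y3 t33
  have tP : Tc G f' P a1 := ⟨s, w, fs, (x1 w).2 hw, hsw⟩
  have cP : Cn G f' P := by
    have : {t | f' t = P} = {s} := by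
      ext t; simp only [hf', Set.mem_setOf_eq, Set.mem_singleton_iff]
      split_ifs with h
      · simp [h]
      · simp [h, hP]
    exact conn_congr G this (conn_single G s)
  replace c1 := cn_congr x1 c1
  replace c2 := cn_congr x2 c2
  replace c3 := cn_congr x3 c3
  replace d1 := cn_congr y1 d1
  replace d2 := cn_congr y2 d2
  replace d3 := cn_congr y3 d3
  apply minor_of_label f' (fun o => o.elim P (Sum.elim ![a1, a2, a3] ![b1, b2, b3]))
  · clear * - nd' n1 n2 n3 n4 n5 n6
    rintro (_ | i | i) (_ | j | j) hij
    all_goals try fin_cases i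
    all_goals try fin_cases j
    all_goals simp at hij ⊢
    all_goals grind
  · rintro (_ | i | i)
    · exact cP
    · fin_cases i <;> simpa
    · fin_cases i <;> simpa
  · have key : ∀ i j : Fin 3, Tc G f' (![a1, a2, a3] i) (![b1, b2, b3] j) := by
      intro i j; fin_cases i <;> fin_cases j <;> simpa
    rintro (_ | i | i) (_ | j | j) hij
    all_goals simp [K33plus, SimpleGraph.fromRel_adj] at hij
    · subst hij; simpa using tP
    · subst hij; simpa using tP.symm
    · exact key i j
    · exact (key j i).symm

lemma plus (h3 : KConnected G 3) {g : V → ℕ} {a1 a2 a3 b1 b2 b3 : ℕ}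
    (h : K33L G g a1 a2 a3 b1 b2 b3) {c : V}
    (hc : g c ∉ [a1, a2, a3, b1, b2, b3]) : IsMinor K33plus G := by
  have hconn : (G.induce ((∅ : Set V)ᶜ)).Connected := h3.2 ∅ (by simp)
  obtain ⟨u, hu⟩ := h.ca1.ne
  obtain ⟨s, hs, w, -, hw, hsw⟩ := boundary G hconn
    (S := {u | g u ∉ [a1, a2, a3, b1, b2, b3]}) (by simp) hc (c0 := u) (by simp)
    (by simp only [Set.mem_setOf_eq, not_not]; rw [hu]; simp)
  simp only [Set.mem_setOf_eq, not_not] at hw hs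
  have r1 : g s ∉ [a2, a3, a1, b1, b2, b3] := by clear * - hs; grind
  have r2 : g s ∉ [a3, a1, a2, b1, b2, b3] := by clear * - hs; grind
  have r3 : g s ∉ [b1, b2, b3, a1, a2, a3] := by clear * - hs; grind
  have r4 : g s ∉ [b2, b3, b1, a1, a2, a3] := by clear * - hs; grind
  have r5 : g s ∉ [b3, b1, b2, a1, a2, a3] := by clear * - hs; grind
  simp only [List.mem_cons, List.not_mem_nil, or_false] at hw
  rcases hw with hw | hw | hw | hw | hw | hw
  · exact plus1 h hs hw hsw
  · exact plus1 h.rotA r1 hw hsw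
  · exact plus1 h.rotA.rotA r2 hw hsw
  · exact plus1 h.swap r3 hw hsw
  · exact plus1 h.swap.rotA r4 hw hsw
  · exact plus1 h.swap.rotA.rotA r5 hw hsw

lemma k33h_of {g : V → ℕ} {a1 a2 a3 b1 b2 b3 p1 p2 : ℕ} (nd : [p1, p2, a1, a2, a3, b1, b2, b3].Nodup)
    (c1 : Cn G g a1) (c2 : Cn G g a2) (c3 : Cn G g a3) (d1 : Cn G g b1) (d2 : Cn G g b2)
    (d3 : Cn G g b3) (k1 : Cn G g p1) (k2 : Cn G g p2)
    (t13 : Tc G g a1 b3) (t21 : Tc G g a2 b1) (t22 : Tc G g a2 b2) (t23 : Tc G g a2 b3)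
    (t31 : Tc G g a3 b1) (t32 : Tc G g a3 b2) (t33 : Tc G g a3 b3) (u1 : Tc G g p1 b1)
    (u2 : Tc G g p2 b2) (u3 : Tc G g p1 a1) (u4 : Tc G g p2 a1) (u5 : Tc G g p1 p2) :
    IsMinor K33h G := by
  have nd' := nd
  simp only [List.nodup_cons, List.mem_cons, List.not_mem_nil, or_false, not_or] at nd'
  apply minor_of_label g (Sum.elim (Sum.elim ![a1, a2, a3] ![b1, b2, b3]) ![p1, p2])
  · clear * - nd'
    rintro ((i | i) | i) ((j | j) | j) hij
    all_goals fin_cases i <;> fin_cases j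
    all_goals simp at hij ⊢
    all_goals grind
  · rintro ((i | i) | i) <;> fin_cases i <;> simpa
  · have key : ∀ i j : Fin 3, ¬ (i = 0 ∧ (j = 0 ∨ j = 1)) →
        Tc G g (![a1, a2, a3] i) (![b1, b2, b3] j) := by
      intro i j hij; fin_cases i <;> fin_cases j <;> simp at hij ⊢ <;> assumption
    have key2 : ∀ (x : Fin 3 ⊕ Fin 3) (k : Fin 2), ((k = 0 ∧ (x = Sum.inl 0 ∨ x = Sum.inr 0)) ∨
        (k = 1 ∧ (x = Sum.inl 0 ∨ x = Sum.inr 1))) →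
        Tc G g (Sum.elim ![a1, a2, a3] ![b1, b2, b3] x) (![p1, p2] k) := by
      rintro x k (⟨rfl, rfl | rfl⟩ | ⟨rfl, rfl | rfl⟩) <;> simp <;> apply Tc.symm <;> assumption
    intro x y hxy
    rw [K33h, SimpleGraph.fromRel_adj] at hxy
    obtain ⟨hne, hxy⟩ := hxy
    rcases x with (i | i) | i <;> rcases y with (j | j) | j
    · simp at hxy
    · exact key i j (by rcases hxy with h | h <;> exact h)
    · exact key2 _ j (by rcases hxy with h | h; exact h; exact h.elim)
    · exact (key j i (by rcases hxy with h | h <;> exact h)).symm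
    · simp at hxy
    · exact key2 _ j (by rcases hxy with h | h; exact h; exact h.elim)
    · exact (key2 _ i (by rcases hxy with h | h; exact h.elim; exact h)).symm
    · exact (key2 _ i (by rcases hxy with h | h; exact h.elim; exact h)).symm
    · fin_cases i <;> fin_cases j <;> simp at hne ⊢
      · exact u5
      · exact u5.symm

end cut


section sep
variable {V : Type} [Finite V] {G : SimpleGraph V} {A B : Set V}

lemma sepY_none (a : A) : (sepY G A B).Adj none (some a) ↔ a.1 ∈ B := by
  simp [sepY, SimpleGraph.fromRel_adj]

lemma sepY_none_iff {t : Option A} (h : (sepY G A B).Adj none t) :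
    ∃ a : A, t = some a ∧ a.1 ∈ B := by
  rcases t with _ | a
  · exact absurd h (SimpleGraph.irrefl _)
  · exact ⟨a, rfl, (sepY_none a).1 h⟩

lemma sepY_some (a b : A) : (sepY G A B).Adj (some a) (some b) ↔ G.Adj a.1 b.1 := by
  simp only [sepY, SimpleGraph.fromRel_adj]
  constructor
  · rintro ⟨-, h | h⟩
    · exact h
    · exact h.symm
  · intro h
    refine ⟨?_, Or.inl h⟩
    intro hh
    rw [Option.some_inj] at hh
    subst hh
    exact SimpleGraph.irrefl _ h

lemma sep_nbr (hsep : IsSep G 3 A B) {u w : V} (hu : u ∉ A) (h : G.Adj u w) : w ∈ B := by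
  rcases hsep.2.2.2.2 h with h | h
  · exact absurd h.1 hu
  · exact h.2

lemma sep_nbr2 (hsep : IsSep G 3 A B) {u w : V} (hu : u ∉ B) (h : G.Adj u w) : w ∈ A := by
  rcases hsep.2.2.2.2 h with h | h
  · exact h.2
  · exact absurd h.1 hu

lemma sep_or (hsep : IsSep G 3 A B) (u : V) : u ∈ A ∨ u ∈ B := by
  have : u ∈ A ∪ B := by rw [hsep.1]; trivial
  exact this

lemma sep_c (hsep : IsSep G 3 A B) : ∃ c, c ∉ A := by
  by_contra h
  push Not at h
  exact hsep.2.1 (Set.eq_univ_of_forall h)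

lemma sep_Lk (h3 : KConnected G 3) (hsep : IsSep G 3 A B) : Lk (sepY G A B) none := by
  intro S a1 a2 hS hN w
  by_contra hw
  push Not at hw
  obtain ⟨c0, hc0⟩ := sep_c hsep
  rcases w with _ | w0
  · exact hw.1 hS
  let α : Option A → V := fun t => t.elim c0 (fun a => a.1)
  have hα : ∀ t : Option A, ∀ a : A, some a ≠ t → a.1 ≠ α t := by
    rintro (_ | b) a hne
    · intro h
      have h' : a.1 = c0 := h
      exact hc0 (h' ▸ a.2)
    · exact fun h => hne (by rw [Subtype.ext h])
  set W : Set V := {u | ∃ h : u ∈ A, some ⟨u, h⟩ ∉ S ∧ some ⟨u, h⟩ ≠ a1 ∧ some ⟨u, h⟩ ≠ a2} with hW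
  have hWB : ∀ u ∈ W, u ∉ B := by
    rintro u ⟨h, k1, k2, k3⟩ hB
    rcases hN none hS (some ⟨u, h⟩) ((sepY_none _).2 hB) with h | h | h
    · exact k1 h
    · exact k2 h
    · exact k3 h
  have := cut h3 (α a1) (α a2) W (d := w0.1) ⟨w0.2, hw⟩ (hα _ _ hw.2.1) (hα _ _ hw.2.2) (by
    rintro u hu t hut
    have hB := hWB u hu
    obtain ⟨h, k1, k2, k3⟩ := hu
    have ht := sep_nbr2 hsep hB hut
    by_cases h1 : some (⟨t, ht⟩ : A) = a1
    · right; left; rw [← h1]; rfl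
    by_cases h2 : some (⟨t, ht⟩ : A) = a2
    · right; right; rw [← h2]; rfl
    left
    refine ⟨ht, fun h' => ?_, h1, h2⟩
    rcases hN _ h' (some ⟨u, h⟩) ((sepY_some _ _).2 hut.symm) with h | h | h
    · exact k1 h
    · exact k2 h
    · exact k3 h)
  have hsub : A ∩ B ⊆ {α a1, α a2} := by
    intro u hu
    rcases this u with h | h | h
    · exact absurd hu.2 (hWB u h)
    · simp [h]
    · simp [h]
  have h1 := Set.ncard_le_ncard hsub (Set.toFinite _)
  have h2 := Set.ncard_insert_le (α a1) {α a2}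
  rw [Set.ncard_singleton] at h2
  have := hsep.2.2.2.1
  omega

open Classical in
/-- extend a labelling of `A` by `k` -/
noncomputable def gl (f : Option A → ℕ) (k : V → ℕ) : V → ℕ :=
  fun u => if h : u ∈ A then f (some ⟨u, h⟩) else k u

lemma gl_in (f : Option A → ℕ) (k : V → ℕ) (a : A) : gl f k a.1 = f (some a) := by
  simp [gl]

lemma gl_out (f : Option A → ℕ) (k : V → ℕ) {u : V} (h : u ∉ A) : gl f k u = k u := by
  simp [gl, h]

lemma gl_cn {f : Option A → ℕ} {k : V → ℕ} {l : ℕ} (h : Cn (sepY G A B) f l) (hn : f none ≠ l)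
    (hk : ∀ u, u ∉ A → k u ≠ l) : Cn G (gl f k) l := by
  have hs : ∀ t : {t | f t = l}, ∃ a : A, t.1 = some a := by
    rintro ⟨_ | a, ht⟩
    · exact absurd ht hn
    · exact ⟨a, rfl⟩
  choose φ hφ using hs
  have hm : ∀ t, gl f k (φ t).1 = l := by
    intro t; rw [gl_in, ← hφ]; exact t.2
  let F : ((sepY G A B).induce {t | f t = l}) →g (G.induce {u | gl f k u = l}) :=
    { toFun := fun t => ⟨(φ t).1, hm t⟩
      map_rel' := by
        intro s t hst
        have : (sepY G A B).Adj s.1 t.1 := hst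
        rw [hφ s, hφ t, sepY_some] at this
        exact this }
  refine SimpleGraph.Connected.map F ?_ h
  rintro ⟨u, hu⟩
  have huA : u ∈ A := by
    by_contra huA
    have hu' : gl f k u = l := hu
    rw [gl_out f k huA] at hu'
    exact hk u huA hu'
  have hu2 : f (some ⟨u, huA⟩) = l := by rw [← gl_in f k]; exact hu
  refine ⟨⟨some ⟨u, huA⟩, hu2⟩, ?_⟩
  have := hφ ⟨some ⟨u, huA⟩, hu2⟩
  apply Subtype.ext
  simp only [Option.some_inj] at this
  change (φ ⟨some ⟨u, huA⟩, hu2⟩).1 = u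
  rw [← this]

lemma gl_tc {f : Option A → ℕ} {k : V → ℕ} {i j : ℕ} (h : Tc (sepY G A B) f i j)
    (hi : f none ≠ i) (hj : f none ≠ j) : Tc G (gl f k) i j := by
  obtain ⟨s, t, hs, ht, hst⟩ := h
  rcases s with _ | s
  · exact absurd hs hi
  rcases t with _ | t
  · exact absurd ht hj
  exact ⟨s.1, t.1, by rw [gl_in, hs], by rw [gl_in, ht], (sepY_some _ _).1 hst⟩

/-- `S` has a neighbour of `x` -/
def At (G : SimpleGraph V) (S : Set V) (x : V) : Prop := ∃ s ∈ S, G.Adj s x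

lemma out1_false (h3 : KConnected G 3) (hp : ¬ IsMinor K33plus G) (hsep : IsSep G 3 A B)
    (h : Out1 (sepY G A B) none) : False := by
  obtain ⟨f, a1, a2, a3, b1, b2, b3, h, hv⟩ := h
  obtain ⟨P, hP⟩ := fresh f
  obtain ⟨c0, hc0⟩ := sep_c hsep
  obtain ⟨nd, c1, c2, c3, d1, d2, d3, t11, t12, t13, t21, t22, t23, t31, t32, t33⟩ := h
  simp only [List.mem_cons, List.not_mem_nil, or_false, not_or] at hv
  obtain ⟨n1, n2, n3, n4, n5, n6⟩ := hv
  have pf : ∀ i, Cn (sepY G A B) f i → P ≠ i := fun i hi => by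
    obtain ⟨u, hu⟩ := hi.ne; rintro rfl; exact hP u hu
  have p1 := pf _ c1
  have p2 := pf _ c2
  have p3 := pf _ c3
  have p4 := pf _ d1
  have p5 := pf _ d2
  have p6 := pf _ d3
  apply hp
  apply plus h3 (g := gl f (fun _ => P)) (c := c0) (a1 := a1) (a2 := a2) (a3 := a3) (b1 := b1)
    (b2 := b2) (b3 := b3)
  · constructor
    · exact nd
    iterate 6 · apply gl_cn <;> first | assumption | (intros; assumption)
    all_goals apply gl_tc <;> assumption
  · rw [gl_out _ _ hc0]
    simp only [List.mem_cons, List.not_mem_nil, or_false, not_or]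
    exact ⟨p1, p2, p3, p4, p5, p6⟩

lemma out2_use (h3 : KConnected G 3) (hp : ¬ IsMinor K33plus G) (hsep : IsSep G 3 A B)
    (h : Out2 (sepY G A B) none) : ∃ s t, s ∈ A ∩ B ∧ t ∈ A ∩ B ∧ s ≠ t ∧
    ∀ S ⊆ Aᶜ, (G.induce S).Connected → At G S s → At G S t → S = Aᶜ := by
  classical
  obtain ⟨f, D, a1, a2, a3, b1, b2, b3, h, hv⟩ := h
  obtain ⟨P, hP⟩ := fresh f
  obtain ⟨nd, cD, c1, c2, c3, d1, d2, d3, ta, tb, t12, t13, t21, t22, t23, t31, t32, t33, hD⟩ := h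
  have get : ∀ i, Tc (sepY G A B) f D i → ∃ s : A, s.1 ∈ B ∧ f (some s) = i := by
    rintro i ⟨u, w, hu, hw, huw⟩
    rw [hv u hu] at huw
    obtain ⟨a, rfl, ha⟩ := sepY_none_iff huw
    exact ⟨a, ha, hw⟩
  obtain ⟨s, hs, fs⟩ := get _ ta
  obtain ⟨t, ht, ft⟩ := get _ tb
  have nd' := nd
  simp only [List.nodup_cons, List.mem_cons, List.not_mem_nil, or_false, not_or] at nd'
  refine ⟨s.1, t.1, ⟨s.2, hs⟩, ⟨t.2, ht⟩, ?_, ?_⟩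
  · intro hst
    rw [Subtype.ext hst, ft] at fs
    clear * - fs nd'
    grind
  intro S hS hSc hSs hSt
  by_contra hne
  obtain ⟨c, hc, hcS⟩ : ∃ c ∈ Aᶜ, c ∉ S := by
    by_contra hh
    push Not at hh
    exact hne (Set.Subset.antisymm hS hh)
  have pf : ∀ i, Cn (sepY G A B) f i → P ≠ i := fun i hi => by
    obtain ⟨u, hu⟩ := hi.ne; rintro rfl; exact hP u hu
  have p0 := pf _ cD
  have p1 := pf _ c1
  have p2 := pf _ c2
  have p3 := pf _ c3
  have p4 := pf _ d1
  have p5 := pf _ d2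
  have p6 := pf _ d3
  set k : V → ℕ := fun u => if u ∈ S then D else P with hk
  have k1 : ∀ i, D ≠ i → P ≠ i → ∀ u, u ∉ A → k u ≠ i := by
    intro i h1 h2 u hu
    simp only [hk]; split_ifs <;> assumption
  obtain ⟨⟨m1, m2, m3, m4, m5, m6⟩, -⟩ := nd'
  have q : ∀ i, D ≠ i → f none ≠ i := by intro i hi; rw [hD]; exact hi
  have gS : ∀ u ∈ S, gl f k u = D := by
    intro u hu; rw [gl_out f k (hS hu)]; simp [hk, hu]
  have fD : {u | gl f k u = D} = S := by
    ext u
    refine ⟨fun hu => ?_, gS u⟩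
    by_cases huA : u ∈ A
    · exfalso
      have := gl_in f k ⟨u, huA⟩
      have := hv _ (this.symm.trans hu)
      simp at this
    · by_contra huS
      have hu' : gl f k u = D := hu
      rw [gl_out f k huA] at hu'
      simp only [hk, huS, if_false] at hu'
      exact p0 hu'
  have cD' : Cn G (gl f k) D := conn_congr G fD hSc
  have ta' : Tc G (gl f k) D a1 := by
    obtain ⟨u, hu, hus⟩ := hSs
    exact ⟨u, s.1, gS u hu, by rw [gl_in, fs], hus⟩
  have tb' : Tc G (gl f k) D b1 := by
    obtain ⟨u, hu, hus⟩ := hSt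
    exact ⟨u, t.1, gS u hu, by rw [gl_in, ft], hus⟩
  replace c1 := gl_cn c1 (q _ m1) (k1 _ m1 p1)
  replace c2 := gl_cn c2 (q _ m2) (k1 _ m2 p2)
  replace c3 := gl_cn c3 (q _ m3) (k1 _ m3 p3)
  replace d1 := gl_cn d1 (q _ m4) (k1 _ m4 p4)
  replace d2 := gl_cn d2 (q _ m5) (k1 _ m5 p5)
  replace d3 := gl_cn d3 (q _ m6) (k1 _ m6 p6)
  replace t12 := gl_tc (k := k) t12 (q _ m1) (q _ m5)
  replace t13 := gl_tc (k := k) t13 (q _ m1) (q _ m6)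
  replace t21 := gl_tc (k := k) t21 (q _ m2) (q _ m4)
  replace t22 := gl_tc (k := k) t22 (q _ m2) (q _ m5)
  replace t23 := gl_tc (k := k) t23 (q _ m2) (q _ m6)
  replace t31 := gl_tc (k := k) t31 (q _ m3) (q _ m4)
  replace t32 := gl_tc (k := k) t32 (q _ m3) (q _ m5)
  replace t33 := gl_tc (k := k) t33 (q _ m3) (q _ m6)
  have nd' := nd
  simp only [List.nodup_cons, List.mem_cons, List.not_mem_nil, or_false, not_or] at nd'
  apply hp
  apply plus h3 (g := mg (gl f k) D a1) (c := c) (a1 := a1) (a2 := a2) (a3 := a3) (b1 := b1)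
    (b2 := b2) (b3 := b3)
  · constructor
    · clear * - nd; grind
    · apply mg_cn' <;> assumption
    iterate 5 · apply mg_cn <;> first | assumption | (clear * - nd'; grind)
    · apply mg_tc' <;> first | assumption | (clear * - nd'; grind)
    all_goals apply mg_tc <;> first | assumption | (clear * - nd'; grind)
  · have : gl f k c = P := by rw [gl_out f k hc]; simp [hk, hcS]
    simp only [mg, this, if_neg p0]
    simp only [List.mem_cons, List.not_mem_nil, or_false, not_or]
    exact ⟨p1, p2, p3, p4, p5, p6⟩

/-- rooted triangle -/
def RT (G : SimpleGraph V) (C : Set V) (x y z : V) : Prop := ∃ X Y Z : Set V, X ⊆ C ∧ Y ⊆ C ∧ Z ⊆ C ∧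
  (G.induce X).Connected ∧ (G.induce Y).Connected ∧ (G.induce Z).Connected ∧
  Disjoint X Y ∧ Disjoint X Z ∧ Disjoint Y Z ∧ At G X x ∧ At G Y y ∧ At G Z z ∧
  (∃ u ∈ X, ∃ w ∈ Y, G.Adj u w) ∧ (∃ u ∈ X, ∃ w ∈ Z, G.Adj u w) ∧ (∃ u ∈ Y, ∃ w ∈ Z, G.Adj u w)

lemma out3_use (h3 : KConnected G 3) (hp : ¬ IsMinor K33plus G) (hh : ¬ IsMinor K33h G)
    (h : Out3 (sepY G A B) none) : ∃ x y z, x ∈ A ∩ B ∧ y ∈ A ∩ B ∧ z ∈ A ∩ B ∧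
    x ≠ y ∧ x ≠ z ∧ y ≠ z ∧ 
    (∀ S ⊆ Aᶜ, (G.induce S).Connected → At G S x → At G S y → At G S z → S = Aᶜ) ∧
    ¬ RT G Aᶜ x y z := by
  classical
  obtain ⟨f, D, a2, a3, b1, b2, b3, h, hv⟩ := h
  obtain ⟨M, hM⟩ := bound_label f
  obtain ⟨nd, cD, c2, c3, d1, d2, d3, t11, t12, t13, t21, t22, t23, t31, t32, t33⟩ := h
  have hD : f none = D := (hv none).2 rfl
  have get : ∀ i, Tc (sepY G A B) f D i → ∃ s : A, s.1 ∈ B ∧ f (some s) = i := by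
    rintro i ⟨u, w, hu, hw, huw⟩
    rw [(hv u).1 hu] at huw
    obtain ⟨a, rfl, ha⟩ := sepY_none_iff huw
    exact ⟨a, ha, hw⟩
  obtain ⟨x, hx, fx⟩ := get _ t11
  obtain ⟨y, hy, fy⟩ := get _ t12
  obtain ⟨z, hz, fz⟩ := get _ t13
  have nd' := nd
  simp only [List.nodup_cons, List.mem_cons, List.not_mem_nil, or_false, not_or] at nd'
  have pf : ∀ i, Cn (sepY G A B) f i → i < M := fun i hi => by
    obtain ⟨u, hu⟩ := hi.ne; rw [← hu]; exact hM u
  have p0 := pf _ cD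
  have p2 := pf _ c2
  have p3 := pf _ c3
  have p4 := pf _ d1
  have p5 := pf _ d2
  have p6 := pf _ d3
  obtain ⟨⟨m2, m3, m4, m5, m6⟩, -⟩ := id nd'
  have q : ∀ i, D ≠ i → f none ≠ i := by intro i hi; rw [hD]; exact hi
  have fsome : ∀ a : A, f (some a) ≠ D := by
    intro a ha; have := (hv _).1 ha; simp at this
  refine ⟨x.1, y.1, z.1, ⟨x.2, hx⟩, ⟨y.2, hy⟩, ⟨z.2, hz⟩, ?_, ?_, ?_, ?_, ?_⟩
  · intro hst
    rw [Subtype.ext hst, fy] at fx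
    clear * - fx nd'
    grind
  · intro hst
    rw [Subtype.ext hst, fz] at fx
    clear * - fx nd'
    grind
  · intro hst
    rw [Subtype.ext hst, fz] at fy
    clear * - fy nd'
    grind
  · intro S hS hSc hSx hSy hSz
    by_contra hne
    obtain ⟨c, hc, hcS⟩ : ∃ c ∈ Aᶜ, c ∉ S := by
      by_contra hh
      push Not at hh
      exact hne (Set.Subset.antisymm hS hh)
    set k : V → ℕ := fun u => if u ∈ S then D else M with hk
    have k1 : ∀ i, D ≠ i → i < M → ∀ u, u ∉ A → k u ≠ i := by
      intro i h1 h2 u hu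
      simp only [hk]; split_ifs
      · assumption
      · omega
    have gS : ∀ u ∈ S, gl f k u = D := by
      intro u hu; rw [gl_out f k (hS hu)]; simp [hk, hu]
    have fD : {u | gl f k u = D} = S := by
      ext u
      refine ⟨fun hu => ?_, gS u⟩
      by_cases huA : u ∈ A
      · exfalso
        have := gl_in f k ⟨u, huA⟩
        exact fsome _ (this.symm.trans hu)
      · by_contra huS
        have hu' : gl f k u = D := hu
        rw [gl_out f k huA] at hu'
        simp only [hk, huS, if_false] at hu'
        omega
    have tt : ∀ (s : A) i, At G S s.1 → f (some s) = i → Tc G (gl f k) D i := by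
      rintro s i ⟨u, hu, hus⟩ hs
      exact ⟨u, s.1, gS u hu, by rw [gl_in, hs], hus⟩
    apply hp
    apply plus h3 (g := gl f k) (c := c) (a1 := D) (a2 := a2) (a3 := a3) (b1 := b1)
      (b2 := b2) (b3 := b3)
    · refine ⟨nd, conn_congr G fD hSc, gl_cn c2 (q _ m2) (k1 _ m2 p2),
        gl_cn c3 (q _ m3) (k1 _ m3 p3), gl_cn d1 (q _ m4) (k1 _ m4 p4),
        gl_cn d2 (q _ m5) (k1 _ m5 p5), gl_cn d3 (q _ m6) (k1 _ m6 p6), tt _ _ hSx fx, tt _ _ hSy fy,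
        tt _ _ hSz fz, gl_tc t21 (q _ m2) (q _ m4), gl_tc t22 (q _ m2) (q _ m5),
        gl_tc t23 (q _ m2) (q _ m6), gl_tc t31 (q _ m3) (q _ m4), gl_tc t32 (q _ m3) (q _ m5),
        gl_tc t33 (q _ m3) (q _ m6)⟩
    · have : gl f k c = M := by rw [gl_out f k hc]; simp [hk, hcS]
      rw [this]
      simp only [List.mem_cons, List.not_mem_nil, or_false, not_or]
      omega
  · rintro ⟨X, Y, Z, hX, hY, hZ, cX, cY, cZ, dXY, dXZ, dYZ, aX, aY, aZ, eXY, eXZ, eYZ⟩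
    rw [Set.disjoint_left] at dXY dXZ dYZ
    set k : V → ℕ := fun u => if u ∈ X then M else if u ∈ Y then M + 1 else if u ∈ Z then D
      else M + 2 with hk
    have k1 : ∀ i, D ≠ i → i < M → ∀ u, u ∉ A → k u ≠ i := by
      intro i h1 h2 u hu
      simp only [hk]; split_ifs
      · omega
      · omega
      · assumption
      · omega
    have gX : ∀ u ∈ X, gl f k u = M := by
      intro u hu; rw [gl_out f k (hX hu)]; simp [hk, hu]
    have gY : ∀ u ∈ Y, gl f k u = M + 1 := by
      intro u hu; rw [gl_out f k (hY hu)]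
      have : u ∉ X := fun h => dXY h hu
      simp [hk, hu, this]
    have gZ : ∀ u ∈ Z, gl f k u = D := by
      intro u hu; rw [gl_out f k (hZ hu)]
      have h1 : u ∉ X := fun h => dXZ h hu
      have h2 : u ∉ Y := fun h => dYZ h hu
      simp [hk, hu, h1, h2]
    have cc : ∀ u i, (i = M ∨ i = M + 1 ∨ i = D) → gl f k u = i → u ∉ A ∧ k u = i := by
      intro u i hi hu
      by_cases huA : u ∈ A
      · exfalso
        have h1 := gl_in f k ⟨u, huA⟩
        have h2 := hM (some ⟨u, huA⟩)
        have h3 := fsome ⟨u, huA⟩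
        dsimp only at h1
        omega
      · exact ⟨huA, by rw [← hu, gl_out f k huA]⟩
    have fX : {u | gl f k u = M} = X := by
      ext u
      refine ⟨fun hu => ?_, gX u⟩
      obtain ⟨-, h⟩ := cc u M (by simp) hu
      simp only [hk] at h
      split_ifs at h <;> first | assumption | omega
    have fY : {u | gl f k u = M + 1} = Y := by
      ext u
      refine ⟨fun hu => ?_, gY u⟩
      obtain ⟨-, h⟩ := cc u (M + 1) (by simp) hu
      simp only [hk] at h
      split_ifs at h <;> first | assumption | omega
    have fZ : {u | gl f k u = D} = Z := by
      ext u
      refine ⟨fun hu => ?_, gZ u⟩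
      obtain ⟨-, h⟩ := cc u D (by simp) hu
      simp only [hk] at h
      split_ifs at h <;> first | assumption | omega
    have tt : ∀ (S : Set V) (j : ℕ) (s : A) (i : ℕ), (∀ u ∈ S, gl f k u = j) → At G S s.1 →
        f (some s) = i → Tc G (gl f k) j i := by
      rintro S j s i gS ⟨u, hu, hus⟩ hs
      exact ⟨u, s.1, gS u hu, by rw [gl_in, hs], hus⟩
    apply hh
    refine k33h_of (g := gl f k) (a1 := D) (a2 := a2) (a3 := a3) (b1 := b1) (b2 := b2) (b3 := b3)
      (p1 := M) (p2 := M + 1) ?_ (conn_congr G fZ cZ) (gl_cn c2 (q _ m2) (k1 _ m2 p2))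
      (gl_cn c3 (q _ m3) (k1 _ m3 p3)) (gl_cn d1 (q _ m4) (k1 _ m4 p4))
      (gl_cn d2 (q _ m5) (k1 _ m5 p5)) (gl_cn d3 (q _ m6) (k1 _ m6 p6)) (conn_congr G fX cX)
      (conn_congr G fY cY) (tt _ _ _ _ gZ aZ fz) (gl_tc t21 (q _ m2) (q _ m4))
      (gl_tc t22 (q _ m2) (q _ m5)) (gl_tc t23 (q _ m2) (q _ m6)) (gl_tc t31 (q _ m3) (q _ m4))
      (gl_tc t32 (q _ m3) (q _ m5)) (gl_tc t33 (q _ m3) (q _ m6)) (tt _ _ _ _ gX aX fx)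
      (tt _ _ _ _ gY aY fy) ?_ ?_ ?_
    · simp only [List.nodup_cons, List.mem_cons, List.not_mem_nil, or_false, not_or]
      refine ⟨by omega, by omega, ?_⟩
      exact nd'
    · obtain ⟨u, hu, w, hw, huw⟩ := eXZ
      exact ⟨u, w, gX u hu, gZ w hw, huw⟩
    · obtain ⟨u, hu, w, hw, huw⟩ := eYZ
      exact ⟨u, w, gY u hu, gZ w hw, huw⟩
    · obtain ⟨u, hu, w, hw, huw⟩ := eXY
      exact ⟨u, w, gX u hu, gY w hw, huw⟩

end sep

section P8
variable {V : Type} [Finite V] {G : SimpleGraph V}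

/-- `C` is the interior of an (almost) induced path from `x` to `y`. -/
def IsPathIn (G : SimpleGraph V) (C : Set V) (x y : V) (k : ℕ) (f : ℕ → V) : Prop :=
  1 ≤ k ∧ f 0 = x ∧ f (k+1) = y ∧ (∀ u, u ∈ C ↔ ∃ i, 1 ≤ i ∧ i ≤ k ∧ f i = u) ∧
  (∀ i j, i < j → j ≤ k+1 → f i ≠ f j) ∧
  (∀ i j, i < j → j ≤ k+1 → ¬ (i = 0 ∧ j = k+1) → (G.Adj (f i) (f j) ↔ j = i+1))

lemma path_lemma : ∀ (n : ℕ) (C : Set V) (x y : V), C.ncard = n → (G.induce C).Connected → x ∉ C →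
    y ∉ C → x ≠ y → At G C x → At G C y →
    (∀ S ⊆ C, (G.induce S).Connected → At G S x → At G S y → S = C) →
    ∃ k f, IsPathIn G C x y k f := by
  intro n
  induction n with
  | zero =>
    intro C x y hn hC
    rw [Set.ncard_eq_zero] at hn
    obtain ⟨c, hc⟩ := conn_ne G hC
    simp [hn] at hc
  | succ n ih =>
    intro C x y hn hC hx hy hxy ⟨c1, hc1, hc1x⟩ ⟨d, hd, hdy⟩ hmin
    by_cases hc1y : G.Adj c1 y
    · have hCe := hmin {c1} (by simpa using hc1) (conn_single G c1) ⟨c1, rfl, hc1x⟩ ⟨c1, rfl, hc1y⟩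
      refine ⟨1, fun n => if n = 0 then x else if n = 1 then c1 else y, le_rfl, by simp, by simp, ?_, ?_, ?_⟩
      · intro u
        rw [← hCe]
        constructor
        · rintro rfl
          exact ⟨1, le_rfl, le_rfl, by simp⟩
        · rintro ⟨i, h1, h2, h⟩
          obtain rfl : i = 1 := by omega
          simpa using h.symm
      · intro i j hij hj
        have e1 : c1 ≠ y := hc1y.ne
        have e2 : x ≠ c1 := hc1x.ne.symm
        rcases (show i = 0 ∧ j = 1 ∨ i = 0 ∧ j = 2 ∨ i = 1 ∧ j = 2 by omega) with ⟨rfl, rfl⟩ | ⟨rfl, rfl⟩ | ⟨rfl, rfl⟩ <;> simp [e1, e2, hxy]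
      · intro i j hij hj hne
        rcases (show i = 0 ∧ j = 1 ∨ i = 0 ∧ j = 2 ∨ i = 1 ∧ j = 2 by omega) with ⟨rfl, rfl⟩ | ⟨rfl, rfl⟩ | ⟨rfl, rfl⟩
        · simp [hc1x.symm]
        · simp at hne
        · simp [hc1y]
    · have hdc : d ≠ c1 := fun h => hc1y (h ▸ hdy)
      obtain ⟨K, hKX, hdK, hK, hKc⟩ := component G (X := C \ {c1}) (a := d) ⟨hd, hdc⟩
      have hc1K : c1 ∉ K := fun h => (hKX h).2 rfl
      have hKC : K ⊆ C := fun u hu => (hKX hu).1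
      obtain ⟨s, hs, c, hc, hcK, hsc⟩ := boundary G hC hKC hdK hc1 hc1K
      obtain rfl : c = c1 := by
        by_contra h
        exact hcK (hKc s hs c ⟨hc, h⟩ hsc)
      have hCe := hmin (insert c K) (Set.insert_subset hc1 hKC) (conn_insert G hK hs hsc)
        ⟨c, by simp, hc1x⟩ ⟨d, by simp [hdK], hdy⟩
      have hcard : K.ncard = n := by
        have := Set.ncard_insert_of_notMem hc1K (Set.toFinite K)
        rw [hCe] at this
        omega
      have hKx : ∀ u ∈ K, ¬ G.Adj x u := by
        intro u hu h
        have := hmin K hKC hK ⟨u, hu, h.symm⟩ ⟨d, hdK, hdy⟩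
        exact hc1K (this ▸ hc1)
      obtain ⟨k, f, hk, h0, h1, hmem, hinj, hadj⟩ := ih K c y hcard hK hc1K (fun h => hy (hKC h))
        (fun h => hy (h ▸ hc1)) ⟨s, hs, hsc⟩ ⟨d, hdK, hdy⟩ (by
          rintro S hSK hS ⟨s', hs', hs'c⟩ ⟨t, ht, hty⟩
          have := hmin (insert c S) (Set.insert_subset hc1 (hSK.trans hKC)) (conn_insert G hS hs' hs'c)
            ⟨c, by simp, hc1x⟩ ⟨t, by simp [ht], hty⟩
          refine hSK.antisymm fun u hu => ?_
          have hu' : u ∈ insert c S := this ▸ hKC hu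
          rcases hu' with rfl | h
          · exact absurd hu hc1K
          · exact h)
      have hfC : ∀ j, j ≤ k → f j ∈ C := by
        intro j hj
        rcases Nat.eq_zero_or_pos j with rfl | hj0
        · rw [h0]; exact hc1
        · exact hKC ((hmem _).2 ⟨j, hj0, hj, rfl⟩)
      refine ⟨k+1, fun n => if n = 0 then x else f (n-1), by omega, by simp, by simpa using h1, ?_, ?_, ?_⟩
      · intro u
        rw [← hCe]
        constructor
        · rintro (rfl | hu)
          · exact ⟨1, le_rfl, by omega, by simpa using h0⟩
          · obtain ⟨i, hi1, hi2, rfl⟩ := (hmem u).1 hu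
            exact ⟨i+1, by omega, by omega, by simp⟩
        · rintro ⟨i, hi1, hi2, h⟩
          rw [hCe, ← h]
          simp only [show i ≠ 0 by omega, if_false]
          exact hfC _ (by omega)
      · intro i j hij hj
        simp only [show j ≠ 0 by omega, if_false]
        split_ifs with hi
        · intro h
          by_cases hjk : j - 1 = k + 1
          · exact hxy (by rw [h, hjk, h1])
          · exact hx (h ▸ hfC (j-1) (by omega))
        · exact hinj _ _ (by omega) (by omega)
      · intro i j hij hj hne
        simp only [show j ≠ 0 by omega, if_false]
        split_ifs with hi
        · subst hi
          by_cases hj1 : j = 1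
          · subst hj1
            simp [h0, hc1x.symm]
          · have hm : f (j-1) ∈ K := (hmem _).2 ⟨j-1, by omega, by omega, rfl⟩
            have := hKx _ hm
            constructor
            · intro h; exact absurd h this
            · intro h; omega
        · by_cases hq : i - 1 = 0 ∧ j - 1 = k+1
          · rw [hq.1, hq.2, h0, h1]
            constructor
            · intro h; exact absurd h hc1y
            · intro h; omega
          · rw [hadj (i-1) (j-1) (by omega) (by omega) hq]
            omega
end P8

section P9
variable {V : Type} [Finite V] {G : SimpleGraph V} {A B : Set V}

/-- no proper connected subset touches both ends -/
def PairMin (G : SimpleGraph V) (C : Set V) (x y : V) : Prop :=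
  ∀ S ⊆ C, (G.induce S).Connected → At G S x → At G S y → S = C

lemma At.mono {S T : Set V} {x : V} (h : At G S x) (hST : S ⊆ T) : At G T x := by
  obtain ⟨s, hs, h⟩ := h
  exact ⟨s, hST hs, h⟩

lemma sep_T (hsep : IsSep G 3 A B) {x y z : V} (hx : x ∈ A ∩ B) (hy : y ∈ A ∩ B) (hz : z ∈ A ∩ B)
    (hxy : x ≠ y) (hxz : x ≠ z) (hyz : y ≠ z) {u : V} (hu : u ∈ A ∩ B) : u = x ∨ u = y ∨ u = z := by
  have h1 : ({x, y, z} : Set V) ⊆ A ∩ B := by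
    rintro w (rfl | rfl | rfl) <;> assumption
  have h2 : ({x, y, z} : Set V).ncard = 3 := Set.ncard_eq_three.2 ⟨x, y, z, hxy, hxz, hyz, rfl⟩
  have h3 := Set.eq_of_subset_of_ncard_le h1 (by rw [h2, hsep.2.2.2.1]) (Set.toFinite _)
  rw [← h3] at hu
  simpa using hu

lemma sep_third (hsep : IsSep G 3 A B) (s t : V) : ∃ z ∈ A ∩ B, z ≠ s ∧ z ≠ t := by
  obtain ⟨x, y, z, hxy, hxz, hyz, h⟩ := Set.ncard_eq_three.1 hsep.2.2.2.1
  have hx : x ∈ A ∩ B := by rw [h]; simp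
  have hy : y ∈ A ∩ B := by rw [h]; simp
  have hz : z ∈ A ∩ B := by rw [h]; simp
  by_contra hcon
  push Not at hcon
  have e1 := hcon x hx
  have e2 := hcon y hy
  have e3 := hcon z hz
  by_cases q1 : x = s
  · have r2 := e2 (fun h => hxy (q1.trans h.symm))
    have r3 := e3 (fun h => hxz (q1.trans h.symm))
    exact hyz (r2.trans r3.symm)
  · have r1 := e1 q1
    by_cases q2 : y = s
    · exact hxz (r1.trans (e3 (fun h => hyz (q2.trans h.symm))).symm)
    · exact hxy (r1.trans (e2 q2).symm)

lemma comp_at (h3 : KConnected G 3) (hsep : IsSep G 3 A B) {K : Set V} (hK : K ⊆ Aᶜ) {d : V}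
    (hd : d ∈ K) (hcl : ∀ k ∈ K, ∀ w ∈ Aᶜ, G.Adj k w → w ∈ K) {z : V} (hz : z ∈ A ∩ B) :
    At G K z := by
  by_contra hcon
  obtain ⟨x, hx, hxz, -⟩ := sep_third hsep z z
  obtain ⟨y, hy, hyz, hyx⟩ := sep_third hsep z x
  rcases cut h3 x y K hd (fun h => hK hd (h ▸ hx.1)) (fun h => hK hd (h ▸ hy.1)) (by
    intro u hu w huw
    by_cases hw : w ∈ A
    · rcases sep_T hsep hx hy hz hyx.symm hxz hyz ⟨hw, sep_nbr hsep (hK hu) huw⟩ with h | h | h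
      · exact Or.inr (Or.inl h)
      · exact Or.inr (Or.inr h)
      · exact absurd ⟨u, hu, h ▸ huw⟩ hcon
    · exact Or.inl (hcl u hu w hw huw)) z with h | h | h
  · exact hK h hz.1
  · exact hxz h.symm
  · exact hyz h.symm

lemma comp_full (h3 : KConnected G 3) (hsep : IsSep G 3 A B)
    (hmin : ∀ S ⊆ Aᶜ, (G.induce S).Connected → (∀ z ∈ A ∩ B, At G S z) → S = Aᶜ) :
    (G.induce Aᶜ).Connected ∧ ∀ z ∈ A ∩ B, At G Aᶜ z := by
  obtain ⟨c, hc⟩ := sep_c hsep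
  obtain ⟨K, hKX, hdK, hK, hKc⟩ := component G (X := Aᶜ) (a := c) hc
  have hat : ∀ z ∈ A ∩ B, At G K z := fun z hz => comp_at h3 hsep hKX hdK hKc hz
  have := hmin K hKX hK hat
  rw [← this]
  exact ⟨hK, hat⟩

lemma sole {C : Set V} {x y z : V} (hC : (G.induce C).Connected) (hx : At G C x)
    (hmin : ∀ S ⊆ C, (G.induce S).Connected → At G S x → At G S y → At G S z → S = C)
    (hn : ¬ PairMin G C y z) :
    ∃ a ∈ C, (G.induce (C \ {a})).Connected ∧ At G (C \ {a}) y ∧ At G (C \ {a}) z ∧ G.Adj a x ∧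
      ∀ u ∈ C, G.Adj u x → u = a := by
  unfold PairMin at hn
  push Not at hn
  obtain ⟨S, hSC, hS, hSy, hSz, hne⟩ := hn
  obtain ⟨c0, hc0, hc0S⟩ : ∃ c ∈ C, c ∉ S := by
    by_contra h
    push Not at h
    exact hne (hSC.antisymm h)
  obtain ⟨a, haC, haS, hconn, -⟩ := noncut G hC hS hSC hc0 hc0S
  have hsub : S ⊆ C \ {a} := fun u hu => ⟨hSC hu, fun h => haS (h ▸ hu)⟩
  have key : ¬ At G (C \ {a}) x := by
    intro h
    have := hmin _ Set.diff_subset hconn h (hSy.mono hsub) (hSz.mono hsub)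
    have h2 : a ∈ C \ {a} := by rw [this]; exact haC
    exact h2.2 rfl
  have hsole : ∀ u ∈ C, G.Adj u x → u = a := by
    intro u hu h
    by_contra hua
    exact key ⟨u, ⟨hu, hua⟩, h⟩
  obtain ⟨u, hu, hux⟩ := hx
  exact ⟨a, haC, hconn, hSy.mono hsub, hSz.mono hsub, (hsole u hu hux) ▸ hux, hsole⟩

lemma seg {f : ℕ → V} (i : ℕ) : ∀ j, i ≤ j → (∀ l, i ≤ l → l < j → G.Adj (f l) (f (l+1))) →
    (G.induce {u | ∃ l, i ≤ l ∧ l ≤ j ∧ f l = u}).Connected := by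
  intro j hij
  induction j, hij using Nat.le_induction with
  | base =>
    intro _
    refine conn_congr G ?_ (conn_single G (f i))
    ext u
    constructor
    · rintro ⟨l, h1, h2, rfl⟩
      obtain rfl : l = i := by omega
      rfl
    · rintro rfl
      exact ⟨i, le_rfl, le_rfl, rfl⟩
  | succ j hij ih =>
    intro h
    have h1 := ih (fun l a b => h l a (by omega))
    refine conn_congr G ?_ (conn_insert G h1 (u := f j) (v := f (j+1)) ⟨j, hij, le_rfl, rfl⟩ (h j hij (by omega)))
    ext u
    constructor
    · rintro ⟨l, h1, h2, rfl⟩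
      by_cases hl : l = j+1
      · subst hl; exact Set.mem_insert _ _
      · exact Set.mem_insert_of_mem _ ⟨l, h1, by omega, rfl⟩
    · rintro (rfl | ⟨l, h1, h2, rfl⟩)
      · exact ⟨j+1, by omega, le_rfl, rfl⟩
      · exact ⟨l, h1, by omega, rfl⟩

lemma rt_of_path {C D S : Set V} {x y z : V} {k : ℕ} {f : ℕ → V} (hp : IsPathIn G S y z k f)
    (hSC : S ⊆ C) (hDC : D ⊆ C) (hDS : ∀ u ∈ D, u ∉ S) (hD : (G.induce D).Connected)
    (hDx : At G D x) {i j : ℕ} (hi : 1 ≤ i) (hij : i < j) (hj : j ≤ k) (h1 : At G D (f i))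
    (h2 : At G D (f j)) : RT G C x y z := by
  obtain ⟨hk, f0, fk, hmem, hinj, hadj⟩ := hp
  have hst : ∀ l, l ≤ k → G.Adj (f l) (f (l+1)) := fun l hl =>
    (hadj l (l+1) (by omega) (by omega) (by omega)).2 rfl
  have hY : ∀ l, 1 ≤ l → l ≤ k → f l ∈ S := fun l a b => (hmem _).2 ⟨l, a, b, rfl⟩
  obtain ⟨d1, hd1, e1⟩ := h1
  obtain ⟨d2, hd2, e2⟩ := h2
  refine ⟨D, {u | ∃ l, 1 ≤ l ∧ l ≤ i ∧ f l = u}, {u | ∃ l, i+1 ≤ l ∧ l ≤ k ∧ f l = u}, hDC, ?_, ?_, hD,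
    seg 1 i hi (fun l a b => hst l (by omega)), seg (i+1) k (by omega) (fun l a b => hst l (by omega)),
    ?_, ?_, ?_, hDx, ⟨f 1, ⟨1, le_rfl, hi, rfl⟩, f0 ▸ (hst 0 (by omega)).symm⟩,
    ⟨f k, ⟨k, by omega, le_rfl, rfl⟩, fk ▸ hst k le_rfl⟩,
    ⟨d1, hd1, f i, ⟨i, hi, le_rfl, rfl⟩, e1⟩, ⟨d2, hd2, f j, ⟨j, by omega, hj, rfl⟩, e2⟩,
    ⟨f i, ⟨i, hi, le_rfl, rfl⟩, f (i+1), ⟨i+1, le_rfl, by omega, rfl⟩, hst i (by omega)⟩⟩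
  · rintro u ⟨l, a, b, rfl⟩
    exact hSC (hY l (by omega) (by omega))
  · rintro u ⟨l, a, b, rfl⟩
    exact hSC (hY l (by omega) (by omega))
  · refine Set.disjoint_left.2 ?_
    rintro u hu ⟨l, a, b, rfl⟩
    exact hDS _ hu (hY l (by omega) (by omega))
  · refine Set.disjoint_left.2 ?_
    rintro u hu ⟨l, a, b, rfl⟩
    exact hDS _ hu (hY l (by omega) (by omega))
  · refine Set.disjoint_left.2 ?_
    rintro u ⟨l, a, b, rfl⟩ ⟨m, a', b', h⟩
    exact hinj l m (by omega) (by omega) h.symm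

lemma out3_pair (h3 : KConnected G 3) (hsep : IsSep G 3 A B) {x y z : V} (hx : x ∈ A ∩ B)
    (hy : y ∈ A ∩ B) (hz : z ∈ A ∩ B) (hxy : x ≠ y) (hxz : x ≠ z) (hyz : y ≠ z)
    (hmin : ∀ S ⊆ Aᶜ, (G.induce S).Connected → At G S x → At G S y → At G S z → S = Aᶜ)
    (hrt : ¬ RT G Aᶜ x y z) :
    PairMin G Aᶜ x y ∨ PairMin G Aᶜ x z ∨ PairMin G Aᶜ y z := by
  by_contra hcon
  push Not at hcon
  obtain ⟨n1, n2, n3⟩ := hcon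
  obtain ⟨hC, hat⟩ := comp_full h3 hsep (fun S hS hc h => hmin S hS hc (h x hx) (h y hy) (h z hz))
  obtain ⟨a, haC, hCa, hay, haz, hax, hasole⟩ := sole hC (hat x hx) hmin n3
  obtain ⟨b, hbC, -, -, -, hby, hbsole⟩ := sole (x := y) (y := x) (z := z) hC (hat y hy)
    (fun S hS hc h1 h2 h3 => hmin S hS hc h2 h1 h3) n2
  obtain ⟨c, hcC, -, -, -, hcz, hcsole⟩ := sole (x := z) (y := x) (z := y) hC (hat z hz)
    (fun S hS hc h1 h2 h3 => hmin S hS hc h2 h3 h1) n1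
  obtain ⟨S, hSa, ⟨hS, hSy, hSz⟩, hSmin⟩ := exists_min
    (fun T : Set V => (G.induce T).Connected ∧ At G T y ∧ At G T z) (Aᶜ \ {a}) ⟨hCa, hay, haz⟩
  have hSC : S ⊆ Aᶜ := fun u hu => (hSa hu).1
  have haS : a ∉ S := fun h => (hSa h).2 rfl
  have hbS : b ∈ S := by
    obtain ⟨u, hu, h⟩ := hSy
    exact hbsole u (hSC hu) h ▸ hu
  have hcS : c ∈ S := by
    obtain ⟨u, hu, h⟩ := hSz
    exact hcsole u (hSC hu) h ▸ hu
  obtain ⟨k, f, hp⟩ := path_lemma _ S y z rfl hS (fun h => hSC h hy.1) (fun h => hSC h hz.1) hyz hSy hSz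
    (fun T hT h1 h2 h3 => hSmin T ⟨h1, h2, h3⟩ hT)
  obtain ⟨D, hDX, haD, hD, hDc⟩ := component G (X := Aᶜ \ S) (a := a) ⟨haC, haS⟩
  have hDC : D ⊆ Aᶜ := fun u hu => (hDX hu).1
  have hDS : ∀ u ∈ D, u ∉ S := fun u hu => (hDX hu).2
  have hnb : ∀ u ∈ D, ∀ w, G.Adj u w → w ∈ D ∨ w = x ∨ w ∈ S := by
    intro u hu w huw
    by_cases hw : w ∈ A
    · rcases sep_T hsep hx hy hz hxy hxz hyz ⟨hw, sep_nbr hsep (hDC hu) huw⟩ with rfl | rfl | rfl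
      · exact Or.inr (Or.inl rfl)
      · exact absurd (hbsole u (hDC hu) huw ▸ hbS) (hDS u hu)
      · exact absurd (hcsole u (hDC hu) huw ▸ hcS) (hDS u hu)
    · by_cases hwS : w ∈ S
      · exact Or.inr (Or.inr hwS)
      · exact Or.inl (hDc u hu w ⟨hw, hwS⟩ huw)
  have hone : ∀ w ∈ Aᶜ, w ∉ D → ∃ p ∈ S, At G D p ∧ p ≠ w := by
    intro w hwA hwD
    by_contra hcon
    push Not at hcon
    rcases cut h3 x w D haD (fun h => haC (h ▸ hx.1)) (fun h => hwD (h ▸ haD)) (by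
      intro u hu v huv
      rcases hnb u hu v huv with h | h | h
      · exact Or.inl h
      · exact Or.inr (Or.inl h)
      · exact Or.inr (Or.inr (hcon v h ⟨u, hu, huv⟩))) y with h | h | h
    · exact hDC h hy.1
    · exact hxy h.symm
    · exact hwA (h ▸ hy.1)
  obtain ⟨p1, hp1, hD1, -⟩ := hone b hbC (fun h => hDS b h hbS)
  obtain ⟨p2, hp2, hD2, hne⟩ := hone p1 (hSC hp1) (fun h => hDS p1 h hp1)
  obtain ⟨i, hi1, hi2, rfl⟩ := (hp.2.2.2.1 p1).1 hp1
  obtain ⟨j, hj1, hj2, rfl⟩ := (hp.2.2.2.1 p2).1 hp2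
  rcases lt_trichotomy i j with h | h | h
  · exact hrt (rt_of_path hp hSC hDC hDS hD ⟨a, haD, hax⟩ hi1 h hj2 hD1 hD2)
  · exact hne (by rw [h])
  · exact hrt (rt_of_path hp hSC hDC hDS hD ⟨a, haD, hax⟩ hj1 h hi2 hD2 hD1)
end P9

section P10
variable {V : Type} [Finite V] {G : SimpleGraph V} {A B : Set V}

lemma wheel_some {n : ℕ} (i j : Fin n) : (wheelGraph n).Adj (some i) (some j) ↔
    i ≠ j ∧ (j.val = (i.val + 1) % n ∨ i.val = (j.val + 1) % n) := by
  simp [wheelGraph, SimpleGraph.fromRel_adj]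

lemma wheel_none {n : ℕ} (i : Fin n) : (wheelGraph n).Adj none (some i) := by
  simp [wheelGraph, SimpleGraph.fromRel_adj]

lemma delta_adj {T : Set V} (a b : B) : (deltaGraph G B T).Adj a b ↔
    a.1 ≠ b.1 ∧ (G.Adj a.1 b.1 ∨ (a.1 ∈ T ∧ b.1 ∈ T)) := by
  simp only [deltaGraph, SimpleGraph.fromRel_adj, ne_eq, Subtype.ext_iff]
  constructor
  · rintro ⟨h, (h1 | h1) | (h1 | h1)⟩
    · exact ⟨h, Or.inl h1⟩
    · exact ⟨h, Or.inr h1⟩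
    · exact ⟨h, Or.inl h1.symm⟩
    · exact ⟨h, Or.inr h1.symm⟩
  · rintro ⟨h, h1⟩
    exact ⟨h, Or.inl h1⟩

lemma wheel_of_pair (h3 : KConnected G 3) (hsep : IsSep G 3 A B) {x y z : V} (hx : x ∈ A ∩ B)
    (hy : y ∈ A ∩ B) (hz : z ∈ A ∩ B) (hxy : x ≠ y) (hxz : x ≠ z) (hyz : y ≠ z)
    (hmin : PairMin G Aᶜ x y) : IsWheel (deltaGraph G B (A ∩ B)) := by
  obtain ⟨hC, hat⟩ := comp_full h3 hsep (fun S hS hc h => hmin S hS hc (h x hx) (h y hy))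
  obtain ⟨k, f, hk, f0, fk, hmem, hinj, hadj⟩ := path_lemma _ Aᶜ x y rfl hC (fun h => h hx.1)
    (fun h => h hy.1) hxy (hat x hx) (hat y hy) hmin
  have hT : ∀ {u : V}, u ∈ A ∩ B → u = x ∨ u = y ∨ u = z := fun hu =>
    sep_T hsep hx hy hz hxy hxz hyz hu
  have hfC : ∀ i, 1 ≤ i → i ≤ k → f i ∉ A := fun i a b => (hmem _).2 ⟨i, a, b, rfl⟩
  have hfT : ∀ i, i ≤ k+1 → (f i ∈ A ∩ B ↔ i = 0 ∨ i = k+1) := by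
    intro i hi
    constructor
    · intro h
      by_contra hcon
      exact hfC i (by omega) (by omega) h.1
    · rintro (rfl | rfl)
      · rw [f0]; exact hx
      · rw [fk]; exact hy
  have hfB : ∀ i, i ≤ k+1 → f i ∈ B := by
    intro i hi
    by_cases h : i = 0 ∨ i = k+1
    · exact ((hfT i hi).2 h).2
    · exact (sep_or hsep (f i)).resolve_left (hfC i (by omega) (by omega))
  have hfz : ∀ i, i ≤ k+1 → f i ≠ z := by
    intro i hi h
    rcases (hfT i hi).1 (h ▸ hz) with rfl | rfl
    · exact hxz (f0.symm.trans h)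
    · exact hyz (fk.symm.trans h)
  have hfz2 : ∀ i, 1 ≤ i → i ≤ k → G.Adj (f i) z := by
    intro i hi1 hi2
    by_contra hcon
    have idx : ∀ j, j ≤ k+1 → G.Adj (f i) (f j) → f j = f (i-1) ∨ f j = f (i+1) := by
      intro j hj h
      rcases lt_trichotomy i j with hij | hij | hij
      · have := (hadj i j hij hj (by omega)).1 h
        exact Or.inr (by rw [this])
      · subst hij; exact absurd h (G.irrefl)
      · have := (hadj j i hij (by omega) (by omega)).1 h.symm
        exact Or.inl (by rw [this]; simp)
    rcases cut h3 (f (i-1)) (f (i+1)) {f i} (d := f i) rfl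
      (hinj (i-1) i (by omega) (by omega)).symm (hinj i (i+1) (by omega) (by omega)) (by
        intro u hu w huw
        rw [Set.mem_singleton_iff] at hu
        subst hu
        right
        by_cases hw : w ∈ A
        · rcases hT ⟨hw, sep_nbr hsep (hfC i hi1 hi2) huw⟩ with h | h | h
          · rw [h, ← f0] at huw ⊢; exact idx 0 (by omega) huw
          · rw [h, ← fk] at huw ⊢; exact idx (k+1) (by omega) huw
          · exact absurd (h ▸ huw) hcon
        · obtain ⟨j, hj1, hj2, rfl⟩ := (hmem w).1 hw
          exact idx j (by omega) huw) z with h | h | h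
    · exact hfz i (by omega) h.symm
    · exact hfz (i-1) (by omega) h.symm
    · exact hfz (i+1) (by omega) h.symm
  let g : Option (Fin (k+2)) → B := fun t =>
    t.elim ⟨z, hz.2⟩ (fun i => ⟨f i.1, hfB i.1 (by have := i.2; omega)⟩)
  have hgi : Function.Injective g := by
    rintro (_ | i) (_ | j) h
    · rfl
    · exact absurd (congrArg Subtype.val h).symm (hfz j.1 (by have := j.2; omega))
    · exact absurd (congrArg Subtype.val h) (hfz i.1 (by have := i.2; omega))
    · have h' : f i.1 = f j.1 := congrArg Subtype.val h
      have hi := i.2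
      have hj := j.2
      congr 1
      apply Fin.ext
      rcases lt_trichotomy i.1 j.1 with hij | hij | hij
      · exact absurd h' (hinj _ _ hij (by omega))
      · exact hij
      · exact absurd h'.symm (hinj _ _ hij (by omega))
  have hgs : Function.Surjective g := by
    rintro ⟨u, hu⟩
    by_cases hA : u ∈ A
    · rcases hT ⟨hA, hu⟩ with h | h | h
      · exact ⟨some ⟨0, by omega⟩, Subtype.ext (f0.trans h.symm)⟩
      · exact ⟨some ⟨k+1, by omega⟩, Subtype.ext (fk.trans h.symm)⟩
      · exact ⟨none, Subtype.ext h.symm⟩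
    · obtain ⟨i, hi1, hi2, h⟩ := (hmem u).1 hA
      exact ⟨some ⟨i, by omega⟩, Subtype.ext h⟩
  have key0 : ∀ i : Fin (k+2), (deltaGraph G B (A ∩ B)).Adj (g (some i)) (g none) := by
    intro i
    have hi := i.2
    rw [delta_adj]
    refine ⟨hfz i.1 (by omega), ?_⟩
    by_cases h : i.1 = 0 ∨ i.1 = k+1
    · exact Or.inr ⟨(hfT i.1 (by omega)).2 h, hz⟩
    · exact Or.inl (hfz2 i.1 (by omega) (by omega))
  have key1 : ∀ i j : Fin (k+2), i.1 < j.1 → ((deltaGraph G B (A ∩ B)).Adj (g (some i)) (g (some j)) ↔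
      (wheelGraph (k+2)).Adj (some i) (some j)) := by
    intro i j hij
    have hi := i.2
    have hj := j.2
    rw [delta_adj, wheel_some]
    change f i.1 ≠ f j.1 ∧ (G.Adj (f i.1) (f j.1) ∨ (f i.1 ∈ A ∩ B ∧ f j.1 ∈ A ∩ B)) ↔ _
    rw [hfT _ (by omega), hfT _ (by omega)]
    have hne : i ≠ j := fun h => by rw [h] at hij; omega
    have hne2 := hinj i.1 j.1 hij (by omega)
    rw [Nat.mod_eq_of_lt (show i.1 + 1 < k+2 by omega)]
    by_cases hq : i.1 = 0 ∧ j.1 = k+1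
    · have e : (j.1 + 1) % (k+2) = 0 := by rw [hq.2]; simp
      rw [e]
      exact ⟨fun _ => ⟨hne, Or.inr hq.1⟩, fun _ => ⟨hne2, Or.inr ⟨Or.inl hq.1, Or.inr hq.2⟩⟩⟩
    · rw [hadj i.1 j.1 hij (by omega) hq]
      constructor
      · rintro ⟨-, h | h⟩
        · exact ⟨hne, Or.inl h⟩
        · exfalso; omega
      · rintro ⟨-, h | h⟩
        · exact ⟨hne2, Or.inl h⟩
        · exfalso
          by_cases hjk : j.1 = k+1
          · have e : (j.1 + 1) % (k+2) = 0 := by rw [hjk]; simp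
            omega
          · rw [Nat.mod_eq_of_lt (by omega)] at h
            omega
  refine ⟨k+2, by omega, ⟨SimpleGraph.Iso.symm ⟨Equiv.ofBijective g ⟨hgi, hgs⟩, ?_⟩⟩⟩
  rintro (_ | i) (_ | j)
  · simp
  · exact ⟨fun _ => wheel_none j, fun _ => (key0 j).symm⟩
  · exact ⟨fun _ => (wheel_none i).symm, fun _ => key0 i⟩
  · rcases lt_trichotomy i.1 j.1 with hij | hij | hij
    · exact key1 i j hij
    · obtain rfl : i = j := Fin.ext hij
      simp
    · rw [SimpleGraph.adj_comm, SimpleGraph.adj_comm (wheelGraph (k+2))]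
      exact key1 j i hij

lemma main (h3 : KConnected G 3) (hfree : ¬ IsMinor K33plus G ∧ ¬ IsMinor K33h G)
    (hsep : IsSep G 3 A B) (hY : ¬ Planar (sepY G A B)) : IsWheel (deltaGraph G B (A ∩ B)) := by
  have hk : IsMinor K33 (sepY G A B) := by
    by_contra hcon
    have h5 : IsMinor K5 (sepY G A B) := by
      by_contra h
      exact hY ⟨h, hcon⟩
    obtain ⟨x, y, z, hxy, hxz, hyz, h⟩ := Set.ncard_eq_three.1 hsep.2.2.2.1
    have hx : x ∈ A ∩ B := by rw [h]; simp
    have hy : y ∈ A ∩ B := by rw [h]; simp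
    have hz : z ∈ A ∩ B := by rw [h]; simp
    refine hcon (k5_to_k33 (x := some ⟨x, hx.1⟩) (y := some ⟨y, hy.1⟩) (z := some ⟨z, hz.1⟩) ?_
      (sep_Lk h3 hsep) h5)
    intro u hu
    obtain ⟨a, rfl, haB⟩ := sepY_none_iff hu
    rcases sep_T hsep hx hy hz hxy hxz hyz ⟨a.2, haB⟩ with h | h | h
    · exact Or.inl (by congr 1; exact Subtype.ext h)
    · exact Or.inr (Or.inl (by congr 1; exact Subtype.ext h))
    · exact Or.inr (Or.inr (by congr 1; exact Subtype.ext h))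
  rcases k33_cases none hk with h | h | h
  · exact (out1_false h3 hfree.1 hsep h).elim
  · obtain ⟨s, t, hs, ht, hst, hm⟩ := out2_use h3 hfree.1 hsep h
    obtain ⟨z, hz, hzs, hzt⟩ := sep_third hsep s t
    exact wheel_of_pair h3 hsep hs ht hz hst hzs.symm hzt.symm hm
  · obtain ⟨x, y, z, hx, hy, hz, hxy, hxz, hyz, hm, hrt⟩ := out3_use h3 hfree.1 hfree.2 h
    rcases out3_pair h3 hsep hx hy hz hxy hxz hyz hm hrt with h | h | h
    · exact wheel_of_pair h3 hsep hx hy hz hxy hxz hyz h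
    · exact wheel_of_pair h3 hsep hx hz hy hxz hxy hyz.symm h
    · exact wheel_of_pair h3 hsep hy hz hx hyz hxy.symm hxz.symm h
end P10

end S8


/-- If `G` is 3-connected and {K33+, K33h}-free and `{G[A], G[B]}` is a 3-separation
with `G[A]^Y` nonplanar, then `G[B]^Δ` is a wheel. -/
theorem stmt8 {V : Type} [Fintype V] (G : SimpleGraph V) (h3 : KConnected G 3)
    (hfree : ¬ IsMinor K33plus G ∧ ¬ IsMinor K33h G)
    (A B : Set V) (hsep : IsSep G 3 A B) (hY : ¬ Planar (sepY G A B)) :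
    IsWheel (deltaGraph G B (A ∩ B)) := by
  exact S8.main h3 hfree hsep hY
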